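/- Let G be a connected bridgeless finite simple cubic graph with n ≥ 8 vertices and m edges whose flow polynomial F(G,t) has only real roots, and write F(G,t) = Σ_{i=0}^{m−n+1} c_i t^i. Then for every i with 0 ≤ i ≤ m−n+1 one has b_i ≤ |c_i|, where the b_i are defined by Σ_{i=0}^{m−n+1} b_i t^i = (t+1)(t+2)^{n/2−2}(t+3)^2. -/

import Mathlib

open Polynomial

/-- The flow polynomial of a finite simple graph `G`:
`F(G,t) = Σ_{Z ⊆ E(G)} (−1)^{m−|Z|} t^{|Z|+c(Z)−n}`, where `c(Z)` is the number of
connected components of the spanning subgraph with edge set `Z`. -/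
noncomputable def flowPoly {V : Type} [Fintype V] (G : SimpleGraph V) : Polynomial ℤ :=
  ∑ Z ∈ G.edgeSet.toFinite.toFinset.powerset,
    (-1 : ℤ) ^ (G.edgeSet.toFinite.toFinset.card - Z.card) •
      (X : Polynomial ℤ) ^
        (Z.card + Nat.card (SimpleGraph.fromEdgeSet (↑Z : Set (Sym2 V))).ConnectedComponent
          - Fintype.card V)

/-- The number of edges of `G`. -/
noncomputable def edgeCount {V : Type} [Fintype V] (G : SimpleGraph V) : ℕ :=
  G.edgeSet.toFinite.toFinset.card


set_option linter.unusedSectionVars false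



namespace FlowAux

section
open scoped Classical

variable {V E M : Type} [Fintype V] [Fintype E]

/-- Edges with exactly one endpoint in `S`. -/
noncomputable def cut (a b : E → V) (S : Finset V) : Finset E :=
  Finset.univ.filter fun e => ¬ (a e ∈ S ↔ b e ∈ S)

/-- Edges which are not loops. -/
noncomputable def nonloops (a b : E → V) : Finset E :=
  Finset.univ.filter fun e => a e ≠ b e

/-- Flows in characteristic two. -/
def IsFlow [AddCommGroup M] (a b : E → V) (f : E → M) : Prop :=
  ∀ v, ∑ e ∈ cut a b {v}, f e = 0

lemma mem_cut {a b : E → V} {S : Finset V} {e : E} :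
    e ∈ cut a b S ↔ ¬ (a e ∈ S ↔ b e ∈ S) := by simp [cut]

lemma mem_nonloops {a b : E → V} {e : E} : e ∈ nonloops a b ↔ a e ≠ b e := by
  simp [nonloops]

lemma cut_compl (a b : E → V) (S : Finset V) : cut a b Sᶜ = cut a b S := by
  ext e; simp only [mem_cut, Finset.mem_compl]; tauto

lemma cut_subset (a b : E → V) (S : Finset V) : cut a b S ⊆ nonloops a b := by
  intro e he
  rw [mem_cut] at he
  rw [mem_nonloops]
  intro h
  simp [h] at he

lemma cut_empty (a b : E → V) : cut a b ∅ = ∅ := by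
  ext e; simp [mem_cut]

lemma cut_univ (a b : E → V) : cut a b Finset.univ = ∅ := by
  ext e; simp [mem_cut]

lemma cut_smul [AddCommGroup M] [Module (ZMod 2) M] (a b : E → V) (S : Finset V) (f : E → M) :
    ∑ e ∈ cut a b S, f e =
      ∑ e, ((if a e ∈ S then (1 : ZMod 2) else 0) + (if b e ∈ S then (1 : ZMod 2) else 0)) • f e := by
  rw [cut, Finset.sum_filter]
  refine Finset.sum_congr rfl fun e _ => ?_
  by_cases h1 : a e ∈ S <;> by_cases h2 : b e ∈ S <;> simp [h1, h2]
  have : (1 + 1 : ZMod 2) = 0 := by decide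
  rw [this, zero_smul]

lemma sum_cut [AddCommGroup M] [Module (ZMod 2) M] (a b : E → V) (S : Finset V) (f : E → M) :
    ∑ e ∈ cut a b S, f e = ∑ v ∈ S, ∑ e ∈ cut a b {v}, f e := by
  simp_rw [cut_smul]
  rw [Finset.sum_comm]
  refine Finset.sum_congr rfl fun e _ => ?_
  rw [← Finset.sum_smul, Finset.sum_add_distrib]
  simp

lemma IsFlow.cut [AddCommGroup M] [Module (ZMod 2) M] {a b : E → V} {f : E → M}
    (hf : IsFlow a b f) (S : Finset V) : ∑ e ∈ cut a b S, f e = 0 := by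
  rw [sum_cut]
  exact Finset.sum_eq_zero fun v _ => hf v

lemma parity (a b : E → V) (S : Finset V) :
    (cut a b S).card % 2 = (∑ v ∈ S, (cut a b {v}).card) % 2 := by
  have h := sum_cut a b S (fun _ => (1 : ZMod 2))
  simp only [Finset.sum_const, nsmul_eq_mul, mul_one] at h
  rw [← Nat.cast_sum] at h
  exact (ZMod.natCast_eq_natCast_iff' _ _ _).1 h

lemma parity_cubic (a b : E → V) (S : Finset V) (h : ∀ v ∈ S, (cut a b {v}).card = 3) :
    (cut a b S).card % 2 = S.card % 2 := by
  rw [parity, Finset.sum_congr rfl h]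
  simp; omega

lemma degree_sum (a b : E → V) : ∑ v, (cut a b {v}).card = 2 * (nonloops a b).card := by
  simp_rw [Finset.card_eq_sum_ones, cut, nonloops, Finset.sum_filter]
  rw [Finset.sum_comm, Finset.mul_sum]
  refine Finset.sum_congr rfl fun e _ => ?_
  by_cases h : a e = b e
  · simp [h]
  · have : (fun v => if ¬(a e ∈ ({v} : Finset V) ↔ b e ∈ ({v} : Finset V)) then 1 else 0)
      = fun v => (if a e = v then 1 else 0) + (if b e = v then 1 else 0) := by
      funext v
      by_cases h1 : a e = v <;> by_cases h2 : b e = v <;> simp [h1, h2]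
      exact h (h1.trans h2.symm)
    rw [this, Finset.sum_add_distrib]
    simp [h]

/-- Prefer the module structure inherited from the ambient space. -/
instance subMod {Y : Type} [AddCommGroup Y] [Module (ZMod 2) Y] (W : Submodule (ZMod 2) Y) :
    Module (ZMod 2) W := W.module

/-- The cycle space of the subgraph with edge set `Z`. -/
noncomputable def Cyc (a b : E → V) (Z : Finset E) : Submodule (ZMod 2) (E → ZMod 2) where
  carrier := {f | IsFlow a b f ∧ ∀ e, e ∉ Z → f e = 0}
  zero_mem' := by simp [IsFlow]
  add_mem' := by
    rintro f g ⟨h1, h2⟩ ⟨h3, h4⟩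
    refine ⟨fun v => ?_, fun e he => ?_⟩
    · simp only [Pi.add_apply, Finset.sum_add_distrib]
      rw [h1 v, h3 v, add_zero]
    · simp [h2 e he, h4 e he]
  smul_mem' := by
    rintro c f ⟨h1, h2⟩
    refine ⟨fun v => ?_, fun e he => ?_⟩
    · simp only [Pi.smul_apply]
      rw [← Finset.smul_sum, h1 v, smul_zero]
    · simp [h2 e he]

lemma mem_Cyc {a b : E → V} {Z : Finset E} {f : E → ZMod 2} :
    f ∈ Cyc a b Z ↔ IsFlow a b f ∧ ∀ e, e ∉ Z → f e = 0 := Iff.rfl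

/-- The flow polynomial. -/
noncomputable def P (a b : E → V) : ℝ[X] :=
  ∑ Z ∈ (nonloops a b).powerset,
    (-1 : ℝ[X]) ^ ((nonloops a b).card - Z.card) * X ^ (Module.finrank (ZMod 2) (Cyc a b Z))

/-- nowhere-zero flows -/
def NZ (a b : E → V) (r : ℕ) : Set (E → Fin r → ZMod 2) :=
  {f | IsFlow a b f ∧ ∀ e, f e ≠ 0 ↔ e ∈ nonloops a b}

lemma isFlow_apply {r : ℕ} {a b : E → V} {f : E → Fin r → ZMod 2} :
    IsFlow a b f ↔ ∀ i, IsFlow a b (fun e => f e i) := by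
  constructor
  · intro h i v
    have := congrFun (h v) i
    simpa using this
  · intro h v
    funext i
    have := h i v
    simpa using this

lemma card_flows (a b : E → V) (Z : Finset E) (r : ℕ) :
    (Finset.univ.filter fun f : E → Fin r → ZMod 2 => IsFlow a b f ∧ ∀ e, e ∉ Z → f e = 0).card
      = (2 ^ r) ^ Module.finrank (ZMod 2) (Cyc a b Z) := by
  have h1 : Fintype.card (Fin r → Cyc a b Z) = (2 ^ r) ^ Module.finrank (ZMod 2) (Cyc a b Z) := by
    rw [Fintype.card_fun, Module.card_eq_pow_finrank (K := ZMod 2), ZMod.card, Fintype.card_fin,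
      ← pow_mul, ← pow_mul, mul_comm]
  rw [← h1, ← Finset.card_univ]
  refine Finset.card_bij' (fun f hf i => ⟨fun e => f e i, ?_⟩) (fun g _ e i => (g i).1 e) ?_ ?_ ?_ ?_
  · simp only [Finset.mem_filter, Finset.mem_univ, true_and] at hf
    exact ⟨isFlow_apply.1 hf.1 i, fun e he => by simp [hf.2 e he]⟩
  · intros; simp
  · intro g _
    simp only [Finset.mem_filter, Finset.mem_univ, true_and]
    exact ⟨isFlow_apply.2 fun i => (g i).2.1, fun e he => funext fun i => (g i).2.2 e he⟩
  · intros; rfl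
  · intros; rfl

lemma P_eval (a b : E → V) (r : ℕ) : (P a b).eval (2 ^ r : ℝ) = (NZ a b r).ncard := by
  set L := nonloops a b with hL
  have key : ∀ f : E → Fin r → ZMod 2,
      (∑ Z ∈ L.powerset, (-1 : ℝ) ^ (L.card - Z.card) *
        (if (IsFlow a b f ∧ ∀ e, e ∉ Z → f e = 0) then 1 else 0)) = if f ∈ NZ a b r then 1 else 0 := by
    intro f
    by_cases hf : IsFlow a b f
    swap
    · simp [hf, NZ]
    by_cases hf2 : ∀ e, e ∉ L → f e = 0
    swap
    · rw [if_neg, Finset.sum_eq_zero]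
      · intro Z hZ
        rw [if_neg, mul_zero]
        rintro ⟨-, h⟩
        exact hf2 fun e he => h e fun h' => he (Finset.mem_powerset.1 hZ h')
      · rintro ⟨-, h⟩
        exact hf2 fun e he => by_contra fun h' => he ((h e).1 h')
    have h1 := Finset.prod_add (fun _ : E => (1 : ℝ)) (fun e => - if f e = 0 then (1 : ℝ) else 0) L
    trans ∏ i ∈ L, ((1 : ℝ) + -if f i = 0 then 1 else 0)
    · rw [h1]
      refine Finset.sum_congr rfl fun Z hZ => ?_
      rw [Finset.mem_powerset] at hZ
      rw [Finset.prod_const_one, one_mul, Finset.prod_neg, Finset.card_sdiff_of_subset hZ]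
      congr 1
      by_cases h : ∀ e ∈ L \ Z, f e = 0
      · rw [if_pos, Finset.prod_eq_one fun e he => if_pos (h e he)]
        refine ⟨hf, fun e he => ?_⟩
        by_cases he' : e ∈ L
        · exact h e (Finset.mem_sdiff.2 ⟨he', he⟩)
        · exact hf2 e he'
      · rw [if_neg]
        · push Not at h
          obtain ⟨e, he, h0⟩ := h
          exact (Finset.prod_eq_zero he (if_neg h0)).symm
        · rintro ⟨-, h'⟩
          exact h fun e he => h' e (Finset.mem_sdiff.1 he).2
    · split_ifs with h
      · refine Finset.prod_eq_one fun e he => ?_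
        rw [if_neg ((h.2 e).2 he)]; simp
      · have : ∃ e ∈ L, f e = 0 := by
          by_contra! h'
          exact h ⟨hf, fun e => ⟨fun h2 => by_contra fun h3 => h2 (hf2 e h3), h' e⟩⟩
        obtain ⟨e, he, h0⟩ := this
        exact Finset.prod_eq_zero he (by simp [h0])
  have h2 : ((NZ a b r).ncard : ℝ) = ∑ f : E → Fin r → ZMod 2, if f ∈ NZ a b r then 1 else 0 := by
    rw [Finset.sum_boole, Set.ncard_eq_toFinset_card', Set.toFinset_card, Fintype.card_subtype]
  rw [h2, ← Finset.sum_congr rfl (fun f _ => key f), Finset.sum_comm, P, eval_finsetSum]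
  refine Finset.sum_congr rfl fun Z _ => ?_
  rw [← Finset.mul_sum, Finset.sum_boole, card_flows]
  simp [hL]

end
end FlowAux

namespace FlowAux
section
open scoped Classical

variable {V E M : Type} [Fintype V] [Fintype E]

/-- Potentials which are constant along the edges of `Z`. -/
def Pot (a b : E → V) (Z : Finset E) : Submodule (ZMod 2) (V → ZMod 2) where
  carrier := {g | ∀ e ∈ Z, g (a e) = g (b e)}
  zero_mem' := by simp
  add_mem' := by
    intro f g hf hg e he
    simp [hf e he, hg e he]
  smul_mem' := by
    intro c f hf e he
    simp [hf e he]

lemma zmod2_add_eq_zero {x y : ZMod 2} : x + y = 0 ↔ x = y := by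
  revert x y; decide

lemma finrank_Cyc (a b : E → V) (Z : Finset E) :
    Module.finrank (ZMod 2) (Cyc a b Z) + Fintype.card V =
      Z.card + Module.finrank (ZMod 2) (Pot a b Z) := by
  obtain ⟨A, hA⟩ : ∃ A : Matrix Z V (ZMod 2), ∀ e v, A e v =
    (if a e ∈ ({v} : Finset V) then 1 else 0) + (if b e ∈ ({v} : Finset V) then 1 else 0) :=
    ⟨fun e v => _, fun _ _ => rfl⟩
  have h1 := LinearMap.finrank_range_add_finrank_ker A.mulVecLin
  have h2 := LinearMap.finrank_range_add_finrank_ker A.transpose.mulVecLin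
  have h3 : Module.finrank (ZMod 2) (LinearMap.range A.mulVecLin)
      = Module.finrank (ZMod 2) (LinearMap.range A.transpose.mulVecLin) := A.rank_transpose.symm
  have h4 : LinearMap.ker A.mulVecLin = Pot a b Z := by
    ext g
    rw [LinearMap.mem_ker]
    constructor
    · intro h e he
      have := congrFun h ⟨e, he⟩
      simp only [Matrix.mulVecLin_apply, Matrix.mulVec, dotProduct, hA, add_mul,
        Finset.sum_add_distrib] at this
      simpa [zmod2_add_eq_zero] using this
    · intro h
      funext ⟨e, he⟩
      simp only [Matrix.mulVecLin_apply, Matrix.mulVec, dotProduct, hA, add_mul,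
        Finset.sum_add_distrib]
      simpa [zmod2_add_eq_zero] using h e he
  have h5 : Module.finrank (ZMod 2) (LinearMap.ker A.transpose.mulVecLin)
      = Module.finrank (ZMod 2) (Cyc a b Z) := by
    have key : ∀ f : E → ZMod 2, (∀ e, e ∉ Z → f e = 0) → ∀ v,
        A.transpose.mulVecLin (fun e : Z => f e) v = ∑ e ∈ cut a b {v}, f e := by
      intro f hf v
      rw [cut_smul, Matrix.mulVecLin_apply, Matrix.mulVec, dotProduct]
      simp only [Matrix.transpose_apply, hA]
      rw [Finset.sum_coe_sort Z (fun e => ((if a e ∈ ({v} : Finset V) then (1 : ZMod 2) else 0) +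
        (if b e ∈ ({v} : Finset V) then (1 : ZMod 2) else 0)) * f e)]
      simp only [smul_eq_mul]
      refine Finset.sum_subset (Finset.subset_univ _) fun e _ he => ?_
      rw [hf e he, mul_zero]
    let φ : Cyc a b Z ≃ₗ[ZMod 2] LinearMap.ker A.transpose.mulVecLin :=
      { toFun := fun f => ⟨fun e => f.1 e, by
          rw [LinearMap.mem_ker]
          funext v
          rw [key f.1 f.2.2 v]
          exact f.2.1 v⟩
        map_add' := fun f g => rfl
        map_smul' := fun c f => rfl
        invFun := fun g => ⟨fun e => if h : e ∈ Z then g.1 ⟨e, h⟩ else 0, by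
          refine ⟨fun v => ?_, fun e he => by simp [he]⟩
          rw [← key _ (fun e he => by simp [he]) v]
          have := congrFun (LinearMap.mem_ker.1 g.2) v
          simpa using this⟩
        left_inv := by
          intro f
          ext e
          by_cases he : e ∈ Z
          · simp [he]
          · simp [he, f.2.2 e he]
        right_inv := by
          intro g
          ext e
          simp }
    exact φ.finrank_eq.symm
  rw [h4] at h1
  rw [Module.finrank_fintype_fun_eq_card] at h1 h2
  rw [h5, Fintype.card_coe] at h2
  omega

lemma exists_cut_of_orth (a b : E → V) (T : Finset E) (hT : T ⊆ nonloops a b)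
    (h : ∀ f ∈ Cyc a b (nonloops a b), ∑ e ∈ T, f e = 0) : ∃ S, T = cut a b S := by
  let bd : (E → ZMod 2) →ₗ[ZMod 2] (V → ZMod 2) :=
    LinearMap.pi fun v => ∑ e ∈ cut a b {v}, LinearMap.proj e
  have hbd : ∀ f v, bd f v = ∑ e ∈ cut a b {v}, f e := by
    intro f v; simp [bd]
  let φ : Module.Dual (ZMod 2) (E → ZMod 2) := ∑ e ∈ T, LinearMap.proj e
  have hφ : ∀ f, φ f = ∑ e ∈ T, f e := by intro f; simp [φ]
  have h1 : φ ∈ (LinearMap.ker bd).dualAnnihilator := by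
    rw [Submodule.mem_dualAnnihilator]
    intro f hf
    rw [hφ]
    have h2 := h (fun e => if e ∈ nonloops a b then f e else 0) ?_
    · rw [← h2]
      exact Finset.sum_congr rfl fun e he => by simp [hT he]
    · refine ⟨fun v => ?_, fun e he => by simp [he]⟩
      have h3 : bd f v = 0 := congrFun (LinearMap.mem_ker.1 hf) v
      rw [← h3, hbd]
      exact Finset.sum_congr rfl fun e he => by simp [cut_subset a b _ he]
  rw [← LinearMap.range_dualMap_eq_dualAnnihilator_ker] at h1
  obtain ⟨ψ, hψ⟩ := h1
  refine ⟨Finset.univ.filter fun v => ψ (Pi.single v 1) = 1, ?_⟩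
  have hψ2 : ∀ g, ψ g = ∑ v, g v * ψ (Pi.single v 1) := by
    intro g
    rw [LinearMap.pi_apply_eq_sum_univ ψ g]
    simp only [smul_eq_mul]
    refine Finset.sum_congr rfl fun v _ => ?_
    congr 2
    funext w
    simp [Pi.single_apply, eq_comm]
  ext e
  have h3 : φ (Pi.single e 1) = ψ (bd (Pi.single e 1)) := by rw [← hψ]; rfl
  rw [hφ, hψ2] at h3
  have h4 : ∀ v, bd (Pi.single e 1) v = (if a e = v then 1 else 0) + (if b e = v then 1 else 0) := by
    intro v
    rw [hbd, cut_smul]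
    simp [Pi.single_apply]
  simp_rw [h4, add_mul, Finset.sum_add_distrib] at h3
  simp [Pi.single_apply] at h3
  rw [mem_cut]
  simp only [Finset.mem_filter, Finset.mem_univ, true_and]
  generalize ψ (fun v => if v = a e then 1 else 0) = x at *
  have d : ∀ x y : ZMod 2, (x + y = 1) ↔ ¬ (x = 1 ↔ y = 1) := by decide
  by_cases he : e ∈ T
  · simp only [he, if_true] at h3
    simp only [he, true_iff]
    rw [← d]; exact h3.symm
  · simp only [he, if_false] at h3
    simp only [he, false_iff]
    rw [← d, ← h3]; decide

/-- Coordinate functional on the cycle space. -/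
noncomputable def ev (a b : E → V) (e : E) : Module.Dual (ZMod 2) (Cyc a b (nonloops a b)) :=
  (LinearMap.proj e).comp (Cyc a b (nonloops a b)).subtype

lemma ev_apply (a b : E → V) (e : E) (f : Cyc a b (nonloops a b)) : ev a b e f = f.1 e := rfl

/-- Rank in the cographic matroid. -/
noncomputable def rk (a b : E → V) (Y : Finset E) : ℕ :=
  Module.finrank (ZMod 2) (Submodule.span (ZMod 2) (ev a b '' (Y : Set E)))

lemma rk_add (a b : E → V) (Y : Finset E) :
    rk a b Y + Module.finrank (ZMod 2) (Cyc a b (nonloops a b \ Y)) =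
      Module.finrank (ZMod 2) (Cyc a b (nonloops a b)) := by
  rw [← Subspace.finrank_add_finrank_dualCoannihilator_eq
    (Submodule.span (ZMod 2) (ev a b '' (Y : Set E))), rk]
  congr 1
  rw [← Submodule.finrank_map_subtype_eq]
  have : Submodule.map (Cyc a b (nonloops a b)).subtype
    (Submodule.span (ZMod 2) (ev a b '' (Y : Set E))).dualCoannihilator =
      Cyc a b (nonloops a b \ Y) := by
    ext f
    simp only [Submodule.mem_map, Submodule.mem_dualCoannihilator, Submodule.subtype_apply]
    constructor
    · rintro ⟨g, hg, rfl⟩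
      refine ⟨g.2.1, fun e he => ?_⟩
      by_cases h1 : e ∈ nonloops a b
      · have h2 : e ∈ Y := by
          by_contra h2
          exact he (Finset.mem_sdiff.2 ⟨h1, h2⟩)
        exact hg _ (Submodule.subset_span ⟨e, h2, rfl⟩)
      · exact g.2.2 e h1
    · rintro ⟨h1, h2⟩
      refine ⟨⟨f, h1, fun e he => h2 e fun h => he (Finset.mem_sdiff.1 h).1⟩, ?_, rfl⟩
      intro φ hφ
      induction hφ using Submodule.span_induction with
      | mem x hx =>
        obtain ⟨e, he, rfl⟩ := hx
        exact h2 e fun h => (Finset.mem_sdiff.1 h).2 he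
      | zero => rfl
      | add x y _ _ hx hy => rw [LinearMap.add_apply, hx, hy, add_zero]
      | smul c x _ hx => rw [LinearMap.smul_apply, hx, smul_zero]
  rw [this]

lemma rk_le (a b : E → V) (Y : Finset E) : rk a b Y ≤ Y.card := by
  have h := finrank_span_finset_le_card (R := ZMod 2) (Y.image (ev a b))
  rw [Finset.coe_image] at h
  exact h.trans Finset.card_image_le

lemma indep_iff (a b : E → V) (Y : Finset E) :
    LinearIndependent (ZMod 2) (fun e : Y => ev a b e) ↔ rk a b Y = Y.card := by
  rw [linearIndependent_iff_card_eq_finrank_span, Fintype.card_coe, rk, Set.finrank, eq_comm]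
  have : Set.range (fun e : Y => ev a b e) = ev a b '' (Y : Set E) := by
    ext; simp
  rw [this]

lemma exists_cut_of_rk_lt (a b : E → V) (Y : Finset E) (hY : Y ⊆ nonloops a b)
    (h : rk a b Y < Y.card) : ∃ S, cut a b S ⊆ Y ∧ (cut a b S).Nonempty := by
  have h1 : ¬ LinearIndependent (ZMod 2) (fun e : Y => ev a b e) := by
    rw [indep_iff]; omega
  rw [Fintype.not_linearIndependent_iff] at h1
  obtain ⟨g, hg, i, hi⟩ := h1
  let T : Finset E := Y.filter fun e => ∃ h : e ∈ Y, g ⟨e, h⟩ = 1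
  have hT : T ⊆ Y := Finset.filter_subset _ _
  have d : ∀ x : ZMod 2, x ≠ 0 → x = 1 := by decide
  obtain ⟨S, hS⟩ := exists_cut_of_orth a b T (hT.trans hY) (by
    intro f hf
    have := LinearMap.congr_fun hg ⟨f, hf⟩
    simp only [LinearMap.sum_apply, LinearMap.smul_apply, ev_apply, LinearMap.zero_apply,
      smul_eq_mul] at this
    rw [← this, Finset.sum_filter, ← Finset.sum_coe_sort Y]
    refine Finset.sum_congr rfl fun e _ => ?_
    by_cases h : g e = 1
    · simp [h]
    · have : g e = 0 := by by_contra h'; exact h (d _ h')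
      simp [this])
  refine ⟨S, hS ▸ hT, i.1, ?_⟩
  rw [← hS]
  simp [T, d _ hi]

lemma rk_lt_of_cut (a b : E → V) (Y : Finset E) (S : Finset V) (h : cut a b S ⊆ Y)
    (hne : (cut a b S).Nonempty) : rk a b Y < Y.card := by
  refine lt_of_le_of_ne (rk_le a b Y) fun h1 => ?_
  rw [← indep_iff, Fintype.linearIndependent_iff] at h1
  obtain ⟨e, he⟩ := hne
  have := h1 (fun e => if e.1 ∈ cut a b S then 1 else 0) (by
    ext f
    simp only [LinearMap.sum_apply, LinearMap.smul_apply, ev_apply, LinearMap.zero_apply,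
      smul_eq_mul]
    rw [Finset.sum_coe_sort Y (fun e => (if e ∈ cut a b S then (1 : ZMod 2) else 0) * f.1 e)]
    refine Eq.trans ?_ (f.2.1.cut S)
    symm
    apply Finset.sum_subset_zero_on_sdiff h
    · intro e he; simp [(Finset.mem_sdiff.1 he).2]
    · intro e he; simp [he]) ⟨e, h he⟩
  simp [he] at this

lemma card_le_pow_rk (a b : E → V) (Y : Finset E) (hY : Y ⊆ nonloops a b)
    (h : ∀ S, (cut a b S).Nonempty → 3 ≤ (cut a b S).card) : Y.card + 1 ≤ 2 ^ rk a b Y := by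
  have hsmall : ∀ Z ⊆ Y, Z.card ≤ 2 → rk a b Z = Z.card := by
    intro Z hZ h2
    by_contra h3
    obtain ⟨S, hS, hne⟩ := exists_cut_of_rk_lt a b Z (hZ.trans hY) (lt_of_le_of_ne (rk_le a b Z) h3)
    have := h S hne
    have := Finset.card_le_card hS
    omega
  have hne : ∀ e ∈ Y, ev a b e ≠ 0 := by
    intro e he h0
    have := hsmall {e} (by simpa using he) (by simp)
    rw [← indep_iff] at this
    exact this.ne_zero ⟨e, by simp⟩ h0
  have hinj : Set.InjOn (ev a b) Y := by
    intro e he f hf hef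
    by_contra hne
    have := hsmall {e, f} (by intro x hx; simp at hx; rcases hx with rfl | rfl <;> assumption)
      Finset.card_le_two
    rw [← indep_iff] at this
    have := this.injective (a₁ := ⟨e, by simp⟩) (a₂ := ⟨f, by simp⟩) hef
    exact hne (congrArg Subtype.val this)
  set W := Submodule.span (ZMod 2) (ev a b '' (Y : Set E)) with hW
  have hfin : Fintype (Module.Dual (ZMod 2) (Cyc a b (nonloops a b))) :=
    have := Module.finite_of_finite (ZMod 2) (M := Module.Dual (ZMod 2) (Cyc a b (nonloops a b)))
    Fintype.ofFinite _
  have h1 : Fintype.card W = 2 ^ rk a b Y := by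
    rw [Module.card_eq_pow_finrank (K := ZMod 2), ZMod.card]; rfl
  rw [← h1, ← Finset.card_image_of_injOn hinj]
  have h0 : (0 : Module.Dual (ZMod 2) (Cyc a b (nonloops a b))) ∉ Y.image (ev a b) := by
    intro h
    obtain ⟨e, he, h⟩ := Finset.mem_image.1 h
    exact hne e he h
  rw [← Finset.card_insert_of_notMem h0, Fintype.card_subtype]
  refine Finset.card_le_card fun x hx => ?_
  simp only [Finset.mem_filter, Finset.mem_univ, true_and]
  rcases Finset.mem_insert.1 hx with rfl | hx
  · exact W.zero_mem
  · obtain ⟨e, he, rfl⟩ := Finset.mem_image.1 hx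
    exact Submodule.subset_span ⟨e, he, rfl⟩

end
end FlowAux

namespace FlowAux
section
open scoped Classical

variable {V E M : Type} [Fintype V] [Fintype E]

/-- Connected and bridgeless, phrased with cuts. -/
def Good (a b : E → V) : Prop :=
  ∀ S : Finset V, S.Nonempty → S ≠ Finset.univ → 2 ≤ (cut a b S).card

lemma Good.of_nonempty {a b : E → V} {S : Finset V} (h : (cut a b S).Nonempty) :
    S.Nonempty ∧ S ≠ Finset.univ := by
  constructor
  · rw [Finset.nonempty_iff_ne_empty]
    rintro rfl
    simp [cut_empty] at h
  · rintro rfl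
    simp [cut_univ] at h

lemma finrank_of_good {a b : E → V} [Nonempty V] (hG : Good a b) :
    Module.finrank (ZMod 2) (Cyc a b (nonloops a b)) + Fintype.card V =
      (nonloops a b).card + 1 := by
  rw [finrank_Cyc]
  congr 1
  have h1 : Pot a b (nonloops a b) = Submodule.span (ZMod 2) {fun _ => 1} := by
    ext g
    rw [Submodule.mem_span_singleton]
    constructor
    · intro hg
      let S : Finset V := Finset.univ.filter fun v => g v = 1
      have hS : cut a b S = ∅ := by
        ext e
        simp only [mem_cut, S, Finset.mem_filter, Finset.mem_univ, true_and]
        by_cases he : a e = b e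
        · simp [he]
        · rw [hg e (mem_nonloops.2 he)]; simp
      by_cases h0 : S.Nonempty
      · have h2 : S = Finset.univ := by
          by_contra h2
          have := hG S h0 h2
          simp [hS] at this
        refine ⟨1, ?_⟩
        funext v
        have : v ∈ S := by rw [h2]; simp
        simp only [S, Finset.mem_filter] at this
        simp [this.2]
      · refine ⟨0, ?_⟩
        funext v
        have d : ∀ x : ZMod 2, x ≠ 1 → 0 = x := by decide
        simp only [Pi.smul_apply, zero_smul]
        refine d _ fun h => h0 ⟨v, by simp [S, h]⟩
    · rintro ⟨c, rfl⟩ e _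
      simp
  rw [h1]
  apply finrank_span_singleton
  obtain ⟨v⟩ := ‹Nonempty V›
  intro h
  exact one_ne_zero (congrFun h v)

/-- dimension of the cycle space -/
noncomputable def dm (a b : E → V) : ℕ := Module.finrank (ZMod 2) (Cyc a b (nonloops a b))

lemma P_eq (a b : E → V) : P a b =
    ∑ Y ∈ (nonloops a b).powerset, (-1 : ℝ[X]) ^ Y.card * X ^ (dm a b - rk a b Y) := by
  rw [P]
  refine Finset.sum_nbij' (fun Z => nonloops a b \ Z) (fun Z => nonloops a b \ Z) ?_ ?_ ?_ ?_ ?_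
  · intro Z _; simp
  · intro Z _; simp
  · intro Z hZ; simpa using hZ
  · intro Z hZ; simpa using hZ
  · intro Z hZ
    rw [Finset.mem_powerset] at hZ
    rw [Finset.card_sdiff_of_subset hZ]
    have h := rk_add a b (nonloops a b \ Z)
    rw [Finset.sdiff_sdiff_eq_self hZ] at h
    congr 2
    rw [dm]; omega

lemma rk_le_dm (a b : E → V) (Y : Finset E) : rk a b Y ≤ dm a b := by
  have := rk_add a b Y
  rw [dm]; omega

lemma rk_mono (a b : E → V) {Y Z : Finset E} (h : Y ⊆ Z) : rk a b Y ≤ rk a b Z := by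
  apply Submodule.finrank_mono
  apply Submodule.span_mono
  exact Set.image_mono (by exact_mod_cast h)

lemma coeff_P (a b : E → V) (j : ℕ) (hj : j ≤ dm a b) : (P a b).coeff (dm a b - j) =
    ∑ Y ∈ (nonloops a b).powerset.filter (fun Y => rk a b Y = j), (-1 : ℝ) ^ Y.card := by
  rw [P_eq, finsetSum_coeff, Finset.sum_filter]
  refine Finset.sum_congr rfl fun Y _ => ?_
  have h1 : ((-1 : ℝ[X]) ^ Y.card) = C ((-1 : ℝ) ^ Y.card) := by simp
  rw [h1, coeff_C_mul, coeff_X_pow]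
  have := rk_le_dm a b Y
  by_cases h : rk a b Y = j
  · simp [h]
  · rw [if_neg h, if_neg (by omega), mul_zero]

lemma natDegree_P_le (a b : E → V) : (P a b).natDegree ≤ dm a b := by
  rw [P_eq]
  refine natDegree_sum_le_of_forall_le _ _ fun Y _ => ?_
  have h1 : ((-1 : ℝ[X]) ^ Y.card) = C ((-1 : ℝ) ^ Y.card) := by simp
  rw [h1]
  refine (natDegree_C_mul_X_pow_le _ _).trans (Nat.sub_le _ _)

lemma rk_empty (a b : E → V) : rk a b ∅ = 0 := by
  have := rk_le a b ∅
  simpa using this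

lemma coeff_top {a b : E → V} (hG : Good a b) : (P a b).coeff (dm a b) = 1 := by
  have h := coeff_P a b 0 (Nat.zero_le _)
  rw [Nat.sub_zero] at h
  rw [h]
  have : (nonloops a b).powerset.filter (fun Y => rk a b Y = 0) = {∅} := by
    ext Y
    simp only [Finset.mem_filter, Finset.mem_powerset, Finset.mem_singleton]
    constructor
    · rintro ⟨h1, h2⟩
      by_contra h3
      obtain ⟨e, he⟩ := Finset.nonempty_iff_ne_empty.2 h3
      have h4 := rk_mono a b (Finset.singleton_subset_iff.2 he)
      obtain ⟨S, hS, hne⟩ := exists_cut_of_rk_lt a b {e} (by simpa using h1 he) (by simp; omega)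
      have h5 := Finset.card_le_card hS
      have h6 := Good.of_nonempty hne
      have := hG S h6.1 h6.2
      simp at h5
      omega
    · rintro rfl
      simp [rk_empty]
  rw [this]
  simp

lemma natDegree_P {a b : E → V} (hG : Good a b) : (P a b).natDegree = dm a b :=
  natDegree_eq_of_le_of_coeff_ne_zero (natDegree_P_le a b) (by rw [coeff_top hG]; exact one_ne_zero)

lemma monic_P {a b : E → V} (hG : Good a b) : (P a b).Monic := by
  rw [Monic, leadingCoeff, natDegree_P hG, coeff_top hG]

lemma P_one {a b : E → V} (h : (nonloops a b).Nonempty) : (P a b).eval 1 = 0 := by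
  have := P_eval a b 0
  rw [pow_zero] at this
  rw [this]
  have : NZ a b 0 = ∅ := by
    ext f
    obtain ⟨e, he⟩ := h
    simp only [Set.mem_empty_iff_false, iff_false]
    rintro ⟨-, h2⟩
    exact (h2 e).2 he (Subsingleton.elim _ _)
  simp [this]

lemma P_two {a b : E → V} {v : V} (h : (cut a b {v}).card = 3) : (P a b).eval 2 = 0 := by
  have := P_eval a b 1
  rw [pow_one] at this
  rw [this]
  have : NZ a b 1 = ∅ := by
    ext f
    simp only [Set.mem_empty_iff_false, iff_false]
    rintro ⟨h1, h2⟩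
    have h3 : ∀ e ∈ cut a b {v}, f e = 1 := by
      intro e he
      have h4 := (h2 e).2 (cut_subset a b _ he)
      revert h4
      generalize f e = x
      revert x
      decide
    have h4 := h1 v
    rw [Finset.sum_congr rfl h3] at h4
    simp [h] at h4
    revert h4
    decide
  simp [this]

lemma coeffs_base {a b : E → V} (h : ∀ S, (cut a b S).Nonempty → 3 ≤ (cut a b S).card)
    (hd : 2 ≤ dm a b) :
    (P a b).coeff (dm a b - 1) = -((nonloops a b).card : ℝ) ∧
    (P a b).coeff (dm a b - 2) = ((nonloops a b).card.choose 2 : ℝ) -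
      (Finset.univ.filter fun T : Finset E => T.card = 3 ∧ ∃ S, T = cut a b S).card := by
  set L := nonloops a b with hL
  have small : ∀ Y ⊆ L, Y.card ≤ 2 → rk a b Y = Y.card := by
    intro Y hY h2
    by_contra h3
    obtain ⟨S, hS, hne⟩ := exists_cut_of_rk_lt a b Y hY (lt_of_le_of_ne (rk_le a b Y) h3)
    have := h S hne
    have := Finset.card_le_card hS
    omega
  constructor
  · rw [coeff_P a b 1 (by omega)]
    have : L.powerset.filter (fun Y => rk a b Y = 1) = L.powersetCard 1 := by
      ext Y
      simp only [Finset.mem_filter, Finset.mem_powerset, Finset.mem_powersetCard]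
      refine and_congr_right fun hY => ⟨fun h1 => ?_, fun h1 => ?_⟩
      · have := card_le_pow_rk a b Y hY h
        rw [h1] at this
        have := rk_le a b Y
        omega
      · rw [small Y hY (by omega), h1]
    rw [this, Finset.sum_congr rfl (g := fun _ => (-1 : ℝ))]
    · simp
    · intro Y hY
      rw [(Finset.mem_powersetCard.1 hY).2, pow_one]
  · rw [coeff_P a b 2 (by omega)]
    have : L.powerset.filter (fun Y => rk a b Y = 2) = L.powersetCard 2 ∪
        Finset.univ.filter fun T : Finset E => T.card = 3 ∧ ∃ S, T = cut a b S := by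
      ext Y
      simp only [Finset.mem_filter, Finset.mem_powerset, Finset.mem_powersetCard, Finset.mem_union,
        Finset.mem_univ, true_and]
      constructor
      · rintro ⟨hY, h1⟩
        have h2 := card_le_pow_rk a b Y hY h
        rw [h1] at h2
        have h3 := rk_le a b Y
        rcases (show Y.card = 2 ∨ Y.card = 3 by omega) with h4 | h4
        · exact Or.inl ⟨hY, h4⟩
        · right
          refine ⟨h4, ?_⟩
          obtain ⟨S, hS, hne⟩ := exists_cut_of_rk_lt a b Y hY (by omega)
          refine ⟨S, (Finset.eq_of_subset_of_card_le hS ?_).symm⟩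
          rw [h4]; exact h S hne
      · rintro (⟨hY, h1⟩ | ⟨h1, S, hS⟩)
        · exact ⟨hY, by rw [small Y hY (by omega), h1]⟩
        · have hY : Y ⊆ L := hS ▸ cut_subset a b S
          refine ⟨hY, ?_⟩
          have h2 := rk_lt_of_cut a b Y S hS.ge (by
            rw [← hS, ← Finset.card_pos]; omega)
          obtain ⟨Z, hZ, hZ2⟩ := Finset.exists_subset_card_eq (show 2 ≤ Y.card by omega)
          have h3 := small Z (hZ.trans hY) (by omega)
          have h4 := rk_mono a b hZ
          omega
    rw [this, Finset.sum_union, Finset.sum_congr rfl (g := fun _ => (1 : ℝ)),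
      Finset.sum_congr (s₁ := Finset.filter _ _) rfl (g := fun _ => (-1 : ℝ))]
    · simp [sub_eq_add_neg]
    · intro Y hY
      rw [(Finset.mem_filter.1 hY).2.1]; norm_num
    · intro Y hY
      rw [(Finset.mem_powersetCard.1 hY).2]; norm_num
    · rw [Finset.disjoint_left]
      intro Y h1 h2
      have := (Finset.mem_powersetCard.1 h1).2
      have := (Finset.mem_filter.1 h2).2.1
      omega

lemma sq_sum (s : Multiset ℝ) : s.sum ^ 2 = (s.map (· ^ 2)).sum + 2 * s.esymm 2 := by
  induction s using Multiset.induction_on with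
  | empty => simp [Multiset.esymm, Multiset.powersetCard_zero_right]
  | cons x s ih =>
    have : (x ::ₘ s).esymm 2 = s.esymm 2 + x * s.sum := by
      simp only [Multiset.esymm, Multiset.powersetCard_cons, Multiset.map_add, Multiset.sum_add,
        Multiset.map_map, Multiset.powersetCard_one]
      congr 1
      have h := Multiset.sum_map_mul_left (s := s) (a := x) (f := fun y => y)
      rw [Multiset.map_id'] at h
      rw [← h]
      congr 1
      refine Multiset.map_congr rfl fun y _ => ?_
      simp
    rw [this]
    simp only [Multiset.sum_cons, Multiset.map_cons]
    linear_combination ih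

lemma esymm_one' (s : Multiset ℝ) : s.esymm 1 = s.sum := by
  simp [Multiset.esymm, Multiset.powersetCard_one]

lemma sum_sq_sub (s : Multiset ℝ) : (s.map (fun x => (x - 3) ^ 2)).sum =
    (s.map (· ^ 2)).sum - 6 * s.sum + 9 * s.card := by
  induction s using Multiset.induction_on with
  | empty => simp
  | cons x s ih =>
    simp only [Multiset.sum_cons, Multiset.map_cons, ih, Multiset.card_cons]
    push_cast
    ring

lemma base_case {a b : E → V} (hG : Good a b) (h3 : ∀ v, (cut a b {v}).card = 3)
    (hn : 4 ≤ Fintype.card V)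
    (hnt : ∀ S : Finset V, 2 ≤ S.card → 2 ≤ Sᶜ.card → 4 ≤ (cut a b S).card)
    (hs : (P a b).Splits) :
    Fintype.card V = 4 ∧ P a b = (X - C 1) * (X - C 2) * (X - C 3) := by
  have hV : Nonempty V := Fintype.card_pos_iff.1 (by omega)
  have hfr : dm a b + Fintype.card V = (nonloops a b).card + 1 := finrank_of_good hG
  have hdeg := degree_sum a b
  simp only [h3, Finset.sum_const, Finset.card_univ, smul_eq_mul] at hdeg
  have triv : ∀ S : Finset V, (cut a b S).Nonempty → (cut a b S).card < 4 →
      ∃ v, cut a b S = cut a b {v} := by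
    intro S hne h4
    have h5 := Good.of_nonempty hne
    have h6 : 1 ≤ S.card := Finset.card_pos.2 h5.1
    have h7 : 1 ≤ Sᶜ.card := by
      rw [Nat.one_le_iff_ne_zero, Ne, Finset.card_eq_zero, Finset.compl_eq_empty_iff]
      exact h5.2
    by_cases h8 : S.card = 1
    · obtain ⟨v, rfl⟩ := Finset.card_eq_one.1 h8
      exact ⟨v, rfl⟩
    by_cases h9 : Sᶜ.card = 1
    · obtain ⟨v, hv⟩ := Finset.card_eq_one.1 h9
      exact ⟨v, by rw [← hv, cut_compl]⟩
    have := hnt S (by omega) (by omega)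
    omega
  have hcut3 : ∀ S, (cut a b S).Nonempty → 3 ≤ (cut a b S).card := by
    intro S hne
    by_contra! h
    obtain ⟨v, hv⟩ := triv S hne (by omega)
    rw [hv, h3] at h
    omega
  have hcount : (Finset.univ.filter fun T : Finset E => T.card = 3 ∧ ∃ S, T = cut a b S).card =
      Fintype.card V := by
    rw [← Finset.card_univ, ← Finset.card_image_of_injOn (f := fun v : V => cut a b {v})]
    · congr 1
      ext T
      simp only [Finset.mem_filter, Finset.mem_univ, true_and, Finset.mem_image]
      constructor
      · rintro ⟨h1, S, rfl⟩
        obtain ⟨v, hv⟩ := triv S (Finset.card_pos.1 (by omega)) (by omega)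
        exact ⟨v, hv.symm⟩
      · rintro ⟨v, rfl⟩
        exact ⟨h3 v, {v}, rfl⟩
    · intro v _ w _ hvw
      by_contra hne
      have h1 : cut a b {v, w} = ∅ := by
        ext e
        have h2 : e ∈ cut a b {v} ↔ e ∈ cut a b {w} := by
          simp only at hvw; rw [hvw]
        simp only [mem_cut, Finset.mem_singleton, Finset.mem_insert] at h2 ⊢
        simp only [Finset.notMem_empty, iff_false, not_not]
        by_cases h4 : a e = v <;> by_cases h5 : b e = v <;> by_cases h6 : a e = w <;>
          by_cases h7 : b e = w <;> simp_all
      have h2 := hG {v, w} (by simp) (by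
        intro h
        have h3 := Finset.card_le_two (a := v) (b := w)
        rw [h, Finset.card_univ] at h3
        omega)
      simp [h1] at h2
  obtain ⟨c1, c2⟩ := coeffs_base hcut3 (by omega)
  rw [hcount] at c2
  set s := (P a b).roots with hsdef
  have hmon := monic_P hG
  have hnd := natDegree_P hG
  have hcard : s.card = dm a b := by
    rw [← hnd]; exact hs.natDegree_eq_card_roots.symm
  have v1 := coeff_eq_esymm_roots_of_splits hs (k := dm a b - 1) (by omega)
  have v2 := coeff_eq_esymm_roots_of_splits hs (k := dm a b - 2) (by omega)
  rw [hnd, hmon.leadingCoeff, c1, show dm a b - (dm a b - 1) = 1 by omega, esymm_one'] at v1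
  rw [hnd, hmon.leadingCoeff, c2, show dm a b - (dm a b - 2) = 2 by omega] at v2
  have hsum : s.sum = (nonloops a b).card := by
    linear_combination v1
  have hsq := sq_sum s
  rw [Nat.cast_choose_two] at v2
  have h33 := sum_sq_sub s
  have hdR : (dm a b : ℝ) + Fintype.card V = (nonloops a b).card + 1 := by exact_mod_cast hfr
  have hdegR : (Fintype.card V : ℝ) * 3 = 2 * (nonloops a b).card := by exact_mod_cast hdeg
  have hmain : (s.map (fun x : ℝ => (x - 3) ^ 2)).sum = 9 - (Fintype.card V : ℝ) := by
    rw [h33, hcard]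
    rw [hsum] at hsq ⊢
    linear_combination (-1) * hsq + 2 * v2 + 9 * hdR - 2 * hdegR
  have hV1 : Nonempty V := hV
  obtain ⟨v⟩ := hV1
  have hL : (nonloops a b).Nonempty := Finset.card_pos.1 (by omega)
  have m1 : (1 : ℝ) ∈ s := (mem_roots hmon.ne_zero).2 (P_one hL)
  have m2 : (2 : ℝ) ∈ s := (mem_roots hmon.ne_zero).2 (P_two (h3 v))
  obtain ⟨s1, hs1⟩ := Multiset.exists_cons_of_mem m1
  have m2' : (2 : ℝ) ∈ s1 := by
    rw [hs1] at m2
    rcases Multiset.mem_cons.1 m2 with h | h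
    · norm_num at h
    · exact h
  obtain ⟨s2, rfl⟩ := Multiset.exists_cons_of_mem m2'
  have hpos : 0 ≤ (s2.map (fun x : ℝ => (x - 3) ^ 2)).sum := by
    apply Multiset.sum_nonneg
    intro x hx
    obtain ⟨y, -, rfl⟩ := Multiset.mem_map.1 hx
    positivity
  rw [hs1] at hmain
  simp only [Multiset.map_cons, Multiset.sum_cons] at hmain
  have hle : (Fintype.card V : ℝ) ≤ 4 := by linarith
  have hle' : Fintype.card V ≤ 4 := by exact_mod_cast hle
  have hV4 : Fintype.card V = 4 := le_antisymm hle' hn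
  refine ⟨hV4, ?_⟩
  have hd3 : dm a b = 3 := by omega
  have hm6 : (nonloops a b).card = 6 := by omega
  rw [hs1, Multiset.card_cons, Multiset.card_cons, hd3] at hcard
  obtain ⟨x, rfl⟩ := Multiset.card_eq_one.1 (show s2.card = 1 by omega)
  rw [hs1, hm6] at hsum
  simp at hsum
  have hx : x = 3 := by linarith
  have := hs.eq_prod_roots_of_monic hmon
  rw [this, ← hsdef, hs1, hx]
  simp
  ring

end
end FlowAux

namespace FlowAux
section
open scoped Classical

variable {V E M : Type} [Fintype V] [Fintype E]

/-- Contract the complement of `A` to a single vertex. -/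
noncomputable def pr (A : Finset V) (v : V) : Option A :=
  if h : v ∈ A then some ⟨v, h⟩ else none

lemma pr_mem {A : Finset V} {v : V} (h : v ∈ A) : pr A v = some ⟨v, h⟩ := by simp [pr, h]

lemma pr_not_mem {A : Finset V} {v : V} (h : v ∉ A) : pr A v = none := by simp [pr, h]

lemma cut_comp {W : Type} [Fintype W] (π : V → W) (a b : E → V) (S : Finset W) :
    cut (π ∘ a) (π ∘ b) S = cut a b (Finset.univ.filter fun v => π v ∈ S) := by
  ext e; simp [mem_cut]

lemma cut_pr_some (a b : E → V) (A : Finset V) (v : A) :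
    cut (pr A ∘ a) (pr A ∘ b) {some v} = cut a b {v.1} := by
  rw [cut_comp]
  congr 1
  ext w
  simp only [Finset.mem_filter, Finset.mem_univ, true_and, Finset.mem_singleton, pr]
  split_ifs with h
  · simp [Subtype.ext_iff]
  · simp only [reduceCtorEq, false_iff]
    rintro rfl
    exact h v.2

lemma cut_pr_none (a b : E → V) (A : Finset V) :
    cut (pr A ∘ a) (pr A ∘ b) {none} = cut a b A := by
  rw [cut_comp, ← cut_compl a b A]
  congr 1
  ext w
  simp only [Finset.mem_filter, Finset.mem_univ, true_and, Finset.mem_singleton, pr,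
    Finset.mem_compl]
  split_ifs with h <;> simp [h]

lemma isFlow_pr [AddCommGroup M] [Module (ZMod 2) M] (a b : E → V) (A : Finset V) (f : E → M) :
    IsFlow (pr A ∘ a) (pr A ∘ b) f ↔ ∀ v ∈ A, ∑ e ∈ cut a b {v}, f e = 0 := by
  constructor
  · intro h v hv
    rw [← h (some ⟨v, hv⟩), cut_pr_some]
  · intro h w
    cases w with
    | none =>
      rw [cut_pr_none, sum_cut]
      exact Finset.sum_eq_zero h
    | some v =>
      rw [cut_pr_some]
      exact h v.1 v.2

lemma nonloops_pr (a b : E → V) (A : Finset V) (e : E) :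
    e ∈ nonloops (pr A ∘ a) (pr A ∘ b) ↔ e ∈ nonloops a b ∧ (a e ∈ A ∨ b e ∈ A) := by
  simp only [mem_nonloops, Function.comp, pr]
  by_cases h1 : a e ∈ A <;> by_cases h2 : b e ∈ A <;> simp [h1, h2]
  · intro h; rw [h] at h1; exact h2 h1
  · intro h; rw [h] at h1; exact h1 h2

/-- nowhere-zero flows as a finset -/
noncomputable def nz (a b : E → V) (r : ℕ) : Finset (E → Fin r → ZMod 2) :=
  Finset.univ.filter fun f => IsFlow a b f ∧ ∀ e, f e ≠ 0 ↔ e ∈ nonloops a b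

lemma mem_nz {a b : E → V} {r : ℕ} {f : E → Fin r → ZMod 2} :
    f ∈ nz a b r ↔ IsFlow a b f ∧ ∀ e, f e ≠ 0 ↔ e ∈ nonloops a b := by simp [nz]

lemma P_eval' (a b : E → V) (r : ℕ) : (P a b).eval (2 ^ r : ℝ) = (nz a b r).card := by
  rw [P_eval, ← Set.ncard_coe_finset]
  congr 2
  ext f
  simp [nz, NZ]

lemma cut_singleton_subset (a b : E → V) (A : Finset V) {v : V} (hv : v ∈ A) :
    cut a b {v} ⊆ nonloops (pr A ∘ a) (pr A ∘ b) := by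
  intro e he
  rw [nonloops_pr]
  refine ⟨cut_subset a b _ he, ?_⟩
  rw [mem_cut] at he
  simp only [Finset.mem_singleton] at he
  by_cases h1 : a e = v
  · left; rw [h1]; exact hv
  · by_cases h2 : b e = v
    · right; rw [h2]; exact hv
    · simp [h1, h2] at he

lemma bij_card (a b : E → V) (A : Finset V) (r : ℕ) :
    (nz a b r).card = ((nz (pr A ∘ a) (pr A ∘ b) r ×ˢ nz (pr Aᶜ ∘ a) (pr Aᶜ ∘ b) r).filter
      fun p => ∀ e ∈ cut a b A, p.1 e = p.2 e).card := by
  set L1 := nonloops (pr A ∘ a) (pr A ∘ b) with hL1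
  set L2 := nonloops (pr Aᶜ ∘ a) (pr Aᶜ ∘ b) with hL2
  have hu : ∀ e, e ∈ nonloops a b ↔ e ∈ L1 ∨ e ∈ L2 := by
    intro e
    rw [hL1, hL2, nonloops_pr, nonloops_pr]
    simp only [Finset.mem_compl]
    tauto
  have hi : ∀ e, e ∈ cut a b A ↔ e ∈ L1 ∧ e ∈ L2 := by
    intro e
    have := @cut_subset _ _ _ _ a b A e
    rw [hL1, hL2, nonloops_pr, nonloops_pr]
    rw [mem_cut] at this ⊢
    have h3 : e ∈ nonloops a b → True := fun _ => trivial
    simp only [Finset.mem_compl]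
    tauto
  refine Finset.card_bij' (fun f _ => (fun e => if e ∈ L1 then f e else 0,
      fun e => if e ∈ L2 then f e else 0))
    (fun p _ e => if e ∈ L1 then p.1 e else p.2 e) ?_ ?_ ?_ ?_
  · intro f hf
    rw [mem_nz] at hf
    rw [Finset.mem_filter, Finset.mem_product, mem_nz, mem_nz, isFlow_pr, isFlow_pr]
    refine ⟨⟨⟨fun v hv => ?_, fun e => ?_⟩, ⟨fun v hv => ?_, fun e => ?_⟩⟩, fun e he => ?_⟩
    · rw [← hf.1 v]
      exact Finset.sum_congr rfl fun e he => if_pos (cut_singleton_subset a b A hv he)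
    · have := hf.2 e
      rw [hu] at this
      by_cases h : e ∈ L1 <;> simp [← hL1, h, this]
    · rw [← hf.1 v]
      exact Finset.sum_congr rfl fun e he => if_pos (cut_singleton_subset a b Aᶜ hv he)
    · have := hf.2 e
      rw [hu] at this
      by_cases h : e ∈ L2 <;> simp [← hL2, h, this]
    · rw [hi] at he
      simp [he]
  · rintro ⟨f1, f2⟩ hp
    rw [Finset.mem_filter, Finset.mem_product, mem_nz, mem_nz, isFlow_pr, isFlow_pr] at hp
    obtain ⟨⟨⟨h1, h2⟩, h3, h4⟩, h5⟩ := hp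
    simp only at h1 h2 h3 h4 h5
    rw [mem_nz]
    refine ⟨fun v => ?_, fun e => ?_⟩
    · by_cases hv : v ∈ A
      · rw [← h1 v hv]
        exact Finset.sum_congr rfl fun e he => if_pos (cut_singleton_subset a b A hv he)
      · have hv' : v ∈ Aᶜ := by simpa using hv
        rw [← h3 v hv']
        refine Finset.sum_congr rfl fun e he => ?_
        by_cases h : e ∈ L1
        · simp only [h, if_true]
          exact h5 e ((hi e).2 ⟨h, cut_singleton_subset a b Aᶜ hv' he⟩)
        · simp only [h, if_false]
    · rw [hu]
      by_cases h : e ∈ L1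
      · simp only [h, if_true, true_or, iff_true]
        exact (h2 e).2 h
      · simp only [h, if_false, false_or]
        exact h4 e
  · intro f hf
    rw [mem_nz] at hf
    funext e
    have := hf.2 e
    rw [hu] at this
    by_cases h : e ∈ L1
    · simp [h]
    · by_cases h' : e ∈ L2
      · simp [h, h']
      · simp only [h, h', or_self, iff_false, not_not] at this
        simp [h, h', this]
  · rintro ⟨f1, f2⟩ hp
    rw [Finset.mem_filter, Finset.mem_product, mem_nz, mem_nz] at hp
    obtain ⟨⟨⟨h1, h2⟩, h3, h4⟩, h5⟩ := hp
    simp only at h1 h2 h3 h4 h5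
    ext1
    · funext e
      by_cases h : e ∈ L1
      · simp [h]
      · have := (h2 e).not.2 h
        simp only [not_not] at this
        simp [h, this]
    · funext e
      by_cases h : e ∈ L2
      · by_cases h' : e ∈ L1
        · simp [h, h', h5 e ((hi e).2 ⟨h', h⟩)]
        · simp [h, h']
      · have := (h4 e).not.2 h
        simp only [not_not] at this
        simp [h, this]

lemma pull {X Y H : Type} (sX : Finset X) (sY : Finset Y) (sH : Finset H) (ρ₁ : X → H) (ρ₂ : Y → H)
    (h1 : ∀ x ∈ sX, ρ₁ x ∈ sH) (h2 : ∀ y ∈ sY, ρ₂ y ∈ sH)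
    (hc : ∀ h ∈ sH, ∀ h' ∈ sH, (sX.filter fun x => ρ₁ x = h).card ≤ (sX.filter fun x => ρ₁ x = h').card) :
    ((sX ×ˢ sY).filter fun p => ρ₁ p.1 = ρ₂ p.2).card * sH.card = sX.card * sY.card := by
  have hp : ((sX ×ˢ sY).filter fun p => ρ₁ p.1 = ρ₂ p.2).card =
      ∑ y ∈ sY, (sX.filter fun x => ρ₁ x = ρ₂ y).card := by
    rw [Finset.card_filter, Finset.sum_product_right]
    refine Finset.sum_congr rfl fun y _ => ?_
    rw [Finset.card_filter]
  by_cases hne : sH.Nonempty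
  · obtain ⟨h0, hh0⟩ := hne
    have e1 : ∀ h ∈ sH, (sX.filter fun x => ρ₁ x = h).card = (sX.filter fun x => ρ₁ x = h0).card :=
      fun h hh => le_antisymm (hc h hh h0 hh0) (hc h0 hh0 h hh)
    rw [hp, Finset.sum_congr rfl fun y hy => e1 _ (h2 y hy), Finset.sum_const,
      Finset.card_eq_sum_card_fiberwise h1, Finset.sum_congr rfl e1, Finset.sum_const]
    simp only [smul_eq_mul]
    ring
  · rw [Finset.not_nonempty_iff_eq_empty] at hne
    subst hne
    have : sX = ∅ := by
      rw [Finset.eq_empty_iff_forall_notMem]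
      intro x hx
      simpa using h1 x hx
    simp [this]

lemma exists_equiv {ι : Type} [Finite ι] {r : ℕ} {x y : ι → Fin r → ZMod 2}
    (hx : LinearIndependent (ZMod 2) x) (hy : LinearIndependent (ZMod 2) y) :
    ∃ g : (Fin r → ZMod 2) ≃ₗ[ZMod 2] (Fin r → ZMod 2), ∀ i, g (x i) = y i := by
  let f := hx.linearCombinationEquiv.symm ≪≫ₗ hy.linearCombinationEquiv
  have : FiniteDimensional (ZMod 2) (Submodule.span (ZMod 2) (Set.range x)) :=
    FiniteDimensional.span_of_finite (ZMod 2) (Set.finite_range _)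
  obtain ⟨g, hg⟩ := Submodule.exists_linearEquiv_restrict_eq f
  refine ⟨g, fun i => ?_⟩
  have h1 : hx.linearCombinationEquiv (Finsupp.single i 1) = x i := by simp
  have h2 : hy.linearCombinationEquiv (Finsupp.single i 1) = y i := by simp
  rw [← h1, ← hg, ← h2]
  simp [f]

lemma indep_pair {r : ℕ} {x y : Fin r → ZMod 2} (hx : x ≠ 0) (hy : y ≠ 0) (hxy : x ≠ y) :
    LinearIndependent (ZMod 2) ![x, y] := by
  rw [LinearIndependent.pair_iff]
  have d : ∀ s : ZMod 2, s = 0 ∨ s = 1 := by decide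
  have hneg : ∀ z : Fin r → ZMod 2, -z = z := by
    intro z; funext i; simp
  intro s t h
  rcases d s with rfl | rfl <;> rcases d t with rfl | rfl <;> simp_all
  rw [add_eq_zero_iff_eq_neg, hneg] at h
  exact hxy h

lemma nz_map {a b : E → V} {r : ℕ} (g : (Fin r → ZMod 2) ≃ₗ[ZMod 2] (Fin r → ZMod 2))
    {f : E → Fin r → ZMod 2} (hf : f ∈ nz a b r) : (fun e => g (f e)) ∈ nz a b r := by
  rw [mem_nz] at hf ⊢
  refine ⟨fun v => ?_, fun e => ?_⟩
  · rw [← map_sum, hf.1 v, map_zero]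
  · rw [← hf.2 e]; simp

lemma fiber_le {a b : E → V} {r : ℕ} {H : Type} (ρ : (E → Fin r → ZMod 2) → H) (h h' : H)
    (g : (Fin r → ZMod 2) ≃ₗ[ZMod 2] (Fin r → ZMod 2))
    (hg : ∀ f, ρ f = h → ρ (fun e => g (f e)) = h') :
    ((nz a b r).filter fun x => ρ x = h).card ≤ ((nz a b r).filter fun x => ρ x = h').card := by
  refine Finset.card_le_card_of_injOn (fun f e => g (f e)) ?_ ?_
  · intro f hf
    simp only [Finset.coe_filter, Set.mem_setOf_eq] at hf ⊢
    exact ⟨nz_map g hf.1, hg f hf.2⟩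
  · intro f _ f' _ hff
    funext e
    exact g.injective (congrFun hff e)

lemma neg_eq (r : ℕ) (z : Fin r → ZMod 2) : -z = z := by
  funext i; simp

lemma card_nonzero (r : ℕ) : (((Finset.univ.filter fun x : Fin r → ZMod 2 => x ≠ 0).card : ℕ) : ℝ) =
    2 ^ r - 1 := by
  have : (Finset.univ.filter fun x : Fin r → ZMod 2 => x ≠ 0) = Finset.univ.erase 0 := by
    ext; simp
  rw [this, Finset.card_erase_of_mem (Finset.mem_univ _), Finset.card_univ, Fintype.card_fun,
    ZMod.card, Fintype.card_fin, Nat.cast_sub Nat.one_le_two_pow]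
  simp

lemma fac2_count (a b : E → V) (A : Finset V) (h : (cut a b A).card = 2) (r : ℕ) :
    ((nz a b r).card : ℝ) * (2 ^ r - 1) =
      (nz (pr A ∘ a) (pr A ∘ b) r).card * (nz (pr Aᶜ ∘ a) (pr Aᶜ ∘ b) r).card := by
  obtain ⟨e1, e2, hne, hD⟩ := Finset.card_eq_two.1 h
  have hm1 : e1 ∈ cut a b A := by simp [hD]
  have key : ∀ B : Finset V, cut a b B = cut a b A → ∀ f ∈ nz (pr B ∘ a) (pr B ∘ b) r,
      f e1 ≠ 0 ∧ f e2 = f e1 := by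
    intro B hB f hf
    rw [mem_nz] at hf
    have h0 := hf.1 none
    rw [cut_pr_none, hB, hD, Finset.sum_pair hne] at h0
    refine ⟨(hf.2 e1).2 ?_, ?_⟩
    · apply cut_subset _ _ {none}
      rw [cut_pr_none, hB]; exact hm1
    · rw [eq_comm, ← neg_eq r (f e2), ← add_eq_zero_iff_eq_neg]; exact h0
  have hA := key A rfl
  have hB := key Aᶜ (cut_compl a b A)
  rw [← card_nonzero, bij_card a b A]
  norm_cast
  rw [← pull (nz (pr A ∘ a) (pr A ∘ b) r) (nz (pr Aᶜ ∘ a) (pr Aᶜ ∘ b) r)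
    (Finset.univ.filter fun x : Fin r → ZMod 2 => x ≠ 0) (fun f => f e1) (fun f => f e1)]
  · congr 1
    apply congrArg Finset.card
    ext p
    simp only [Finset.mem_filter]
    refine and_congr_right fun hp => ?_
    rw [Finset.mem_product] at hp
    rw [hD]
    simp only [Finset.mem_insert, Finset.mem_singleton, forall_eq_or_imp, forall_eq]
    rw [(hA _ hp.1).2, (hB _ hp.2).2, and_self]
  · intro f hf; simpa using (hA f hf).1
  · intro f hf; simpa using (hB f hf).1
  · intro x hx y hy
    simp only [Finset.mem_filter, Finset.mem_univ, true_and] at hx hy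
    obtain ⟨g, hg⟩ := exists_equiv (ι := Unit) (x := fun _ => x) (y := fun _ => y)
      (LinearIndependent.of_subsingleton () hx) (LinearIndependent.of_subsingleton () hy)
    refine fiber_le (fun f => f e1) x y g ?_
    intro f hf
    simp only at hf ⊢
    rw [hf]
    exact hg ()

lemma fac3_count (a b : E → V) (A : Finset V) (h : (cut a b A).card = 3) (r : ℕ) :
    ((nz a b r).card : ℝ) * ((2 ^ r - 1) * (2 ^ r - 2)) =
      (nz (pr A ∘ a) (pr A ∘ b) r).card * (nz (pr Aᶜ ∘ a) (pr Aᶜ ∘ b) r).card := by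
  obtain ⟨e1, e2, e3, h12, h13, h23, hD⟩ := Finset.card_eq_three.1 h
  have key : ∀ B : Finset V, cut a b B = cut a b A → ∀ f ∈ nz (pr B ∘ a) (pr B ∘ b) r,
      f e1 ≠ 0 ∧ f e2 ≠ 0 ∧ f e1 ≠ f e2 ∧ f e3 = f e1 + f e2 := by
    intro B hB f hf
    rw [mem_nz] at hf
    have h0 := hf.1 none
    rw [cut_pr_none, hB, hD, Finset.sum_insert (by simp [h12, h13]), Finset.sum_pair h23] at h0
    have h1 : ∀ e ∈ cut a b A, f e ≠ 0 := by
      intro e he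
      refine (hf.2 e).2 ?_
      apply cut_subset _ _ {none}
      rw [cut_pr_none, hB]; exact he
    have h3 : f e3 = f e1 + f e2 := by
      rw [eq_comm, ← neg_eq r (f e3), ← add_eq_zero_iff_eq_neg, add_assoc]; exact h0
    refine ⟨h1 _ (by simp [hD]), h1 _ (by simp [hD]), fun h4 => ?_, h3⟩
    refine h1 e3 (by simp [hD]) ?_
    rw [h3, h4, add_eq_zero_iff_eq_neg, neg_eq]
  have hA := key A rfl
  have hB := key Aᶜ (cut_compl a b A)
  have hcard : (((Finset.univ.filter fun x : Fin r → ZMod 2 => x ≠ 0).offDiag.card : ℕ) : ℝ) =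
      (2 ^ r - 1) * (2 ^ r - 2) := by
    rw [Finset.offDiag_card, Nat.cast_sub (Nat.le_mul_self _), Nat.cast_mul, card_nonzero]
    ring
  rw [← hcard, bij_card a b A]
  norm_cast
  rw [← pull (nz (pr A ∘ a) (pr A ∘ b) r) (nz (pr Aᶜ ∘ a) (pr Aᶜ ∘ b) r)
    (Finset.univ.filter fun x : Fin r → ZMod 2 => x ≠ 0).offDiag
    (fun f => (f e1, f e2)) (fun f => (f e1, f e2))]
  · congr 1
    apply congrArg Finset.card
    ext p
    simp only [Finset.mem_filter]
    refine and_congr_right fun hp => ?_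
    rw [Finset.mem_product] at hp
    rw [hD]
    simp only [Finset.mem_insert, Finset.mem_singleton, forall_eq_or_imp, forall_eq, Prod.mk.injEq]
    rw [(hA _ hp.1).2.2.2, (hB _ hp.2).2.2.2]
    constructor
    · rintro ⟨h1, h2, -⟩; exact ⟨h1, h2⟩
    · rintro ⟨h1, h2⟩; exact ⟨h1, h2, by rw [h1, h2]⟩
  · intro f hf
    have := hA f hf
    simp [Finset.mem_offDiag, this.1, this.2.1, this.2.2.1]
  · intro f hf
    have := hB f hf
    simp [Finset.mem_offDiag, this.1, this.2.1, this.2.2.1]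
  · rintro ⟨x1, x2⟩ hx ⟨y1, y2⟩ hy
    simp only [Finset.mem_offDiag, Finset.mem_filter, Finset.mem_univ, true_and] at hx hy
    obtain ⟨g, hg⟩ := exists_equiv (indep_pair hx.1 hx.2.1 hx.2.2) (indep_pair hy.1 hy.2.1 hy.2.2)
    refine fiber_le (fun f => (f e1, f e2)) (x1, x2) (y1, y2) g ?_
    intro f hf
    simp only [Prod.mk.injEq] at hf ⊢
    rw [hf.1, hf.2]
    exact ⟨hg 0, hg 1⟩

lemma poly_ext {p q : ℝ[X]} (h : ∀ r : ℕ, p.eval (2 ^ r : ℝ) = q.eval (2 ^ r : ℝ)) : p = q := by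
  apply eq_of_infinite_eval_eq
  refine Set.Infinite.mono (s := Set.range fun r : ℕ => (2 ^ r : ℝ)) ?_ ?_
  · rintro _ ⟨r, rfl⟩; exact h r
  · exact Set.infinite_range_of_injective (pow_right_injective₀ (by norm_num) (by norm_num))

lemma fac2 (a b : E → V) (A : Finset V) (h : (cut a b A).card = 2) :
    P a b * (X - C 1) = P (pr A ∘ a) (pr A ∘ b) * P (pr Aᶜ ∘ a) (pr Aᶜ ∘ b) := by
  apply poly_ext
  intro r
  simp only [eval_mul, eval_sub, eval_X, eval_C, P_eval']
  exact fac2_count a b A h r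

lemma fac3 (a b : E → V) (A : Finset V) (h : (cut a b A).card = 3) :
    P a b * ((X - C 1) * (X - C 2)) = P (pr A ∘ a) (pr A ∘ b) * P (pr Aᶜ ∘ a) (pr Aᶜ ∘ b) := by
  apply poly_ext
  intro r
  simp only [eval_mul, eval_sub, eval_X, eval_C, P_eval']
  exact fac3_count a b A h r

end
end FlowAux


namespace FlowAux
section
open scoped Classical
variable {V E M : Type} [Fintype V] [Fintype E]

lemma pr_surj {A : Finset V} (hA : Aᶜ.Nonempty) (w : Option A) : ∃ v, pr A v = w := by
  cases w with
  | none =>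
    obtain ⟨v, hv⟩ := hA
    exact ⟨v, pr_not_mem (Finset.mem_compl.1 hv)⟩
  | some w => exact ⟨w.1, pr_mem w.2⟩

lemma good_pr {a b : E → V} (hG : Good a b) {A : Finset V} (hA : Aᶜ.Nonempty) :
    Good (pr A ∘ a) (pr A ∘ b) := by
  intro S hS hS'
  rw [cut_comp]
  apply hG
  · obtain ⟨w, hw⟩ := hS
    obtain ⟨v, rfl⟩ := pr_surj hA w
    exact ⟨v, by simpa using hw⟩
  · intro h
    apply hS'
    ext w
    obtain ⟨v, rfl⟩ := pr_surj hA w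
    have := Finset.mem_univ v
    rw [← h] at this
    simpa using this

lemma deg_pr {a b : E → V} {A : Finset V} (hd : ∀ v, (cut a b {v}).card ≤ 3)
    (hA : (cut a b A).card ≤ 3) (w : Option A) :
    (cut (pr A ∘ a) (pr A ∘ b) {w}).card ≤ 3 := by
  cases w with
  | none => rw [cut_pr_none]; exact hA
  | some w => rw [cut_pr_some]; exact hd _

lemma cut_comp' {W : Type} [Fintype W] {π : V → W} {a b : E → V} {S : Finset W} {T : Finset V}
    (h : ∀ v, v ∈ T ↔ π v ∈ S) : cut (π ∘ a) (π ∘ b) S = cut a b T := by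
  ext e; simp [mem_cut, h]

lemma card_opt (A : Finset V) : Fintype.card (Option A) = A.card + 1 := by simp

lemma side {a b : E → V} (hG : Good a b)
    (hS : ∀ S : Finset V, S.card = 2 → 3 ≤ (cut a b S).card) {A : Finset V}
    (hA : 2 ≤ A.card) (hA' : 2 ≤ Aᶜ.card) (h3 : ∀ v ∈ A, (cut a b {v}).card = 3)
    (hk : (cut a b A).card = 2 ∨ ((cut a b A).card = 3 ∧
      ∀ S : Finset V, 2 ≤ S.card → 2 ≤ Sᶜ.card → (cut a b S).card ≠ 2)) :
    (∀ S : Finset (Option A), S.card = 2 → 3 ≤ (cut (pr A ∘ a) (pr A ∘ b) S).card) ∧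
    (∀ w, w ≠ none → (cut (pr A ∘ a) (pr A ∘ b) {w}).card = 3) ∧
    4 ≤ Fintype.card (Option A) := by
  have hpar := parity_cubic a b A h3
  have key : ∀ v (hv : v ∈ A),
      3 ≤ (cut (pr A ∘ a) (pr A ∘ b) {none, some (⟨v, hv⟩ : A)}).card := by
    intro v hv
    rw [cut_comp' (T := (A.erase v)ᶜ), cut_compl]
    swap
    · intro u
      by_cases hu : u ∈ A
      · simp [pr_mem hu, hu]
      · simp [pr_not_mem hu, hu]
    have hc := Finset.card_erase_of_mem hv
    have hpar2 := parity_cubic a b (A.erase v) (fun w hw => h3 w (Finset.mem_of_mem_erase hw))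
    have hcc : (A.erase v)ᶜ.card + (A.erase v).card = Aᶜ.card + A.card := by
      have h1 := Finset.card_add_card_compl (A.erase v)
      have h2 := Finset.card_add_card_compl A
      omega
    have h2 := hG (A.erase v) (Finset.card_pos.1 (by omega)) (by
      intro h
      have : (A.erase v)ᶜ.card = 0 := by rw [h]; simp
      omega)
    rcases hk with hk | ⟨hk, hk'⟩
    · omega
    · have := hk' (A.erase v) (by omega) (by omega)
      omega
  refine ⟨?_, ?_, ?_⟩
  · intro S hS2
    obtain ⟨x, y, hxy, rfl⟩ := Finset.card_eq_two.1 hS2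
    cases x with
    | none =>
      cases y with
      | none => exact absurd rfl hxy
      | some y => exact key y.1 y.2
    | some x =>
      cases y with
      | none => rw [Finset.pair_comm]; exact key x.1 x.2
      | some y =>
        rw [cut_comp' (T := {x.1, y.1})]
        swap
        · intro u
          by_cases hu : u ∈ A
          · rw [pr_mem hu]
            simp only [Finset.mem_insert, Finset.mem_singleton, Option.some.injEq]
            rw [Subtype.ext_iff, Subtype.ext_iff]
          · have hx : u ≠ x.1 := fun h => hu (h ▸ x.2)
            have hy : u ≠ y.1 := fun h => hu (h ▸ y.2)
            simp [pr_not_mem hu, hx, hy]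
        apply hS
        rw [Finset.card_pair]
        intro h
        exact hxy (by rw [Subtype.ext h])
  · intro w hw
    cases w with
    | none => exact absurd rfl hw
    | some w => rw [cut_pr_some]; exact h3 _ w.2
  · rw [card_opt]
    by_contra hlt
    have h2 : A.card = 2 := by omega
    have := hS A h2
    rcases hk with hk | ⟨hk, -⟩ <;> omega

lemma eq_of_dvd {p q : ℝ[X]} (hp : p.Monic) (hq : q.Monic) (h : q ∣ p)
    (hd : p.natDegree ≤ q.natDegree) : p = q :=
  eq_of_monic_of_dvd_of_natDegree_le hq hp h hd

lemma deg_ge {a b : E → V} (hG : Good a b) (hn : 2 ≤ Fintype.card V) (v : V) :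
    2 ≤ (cut a b {v}).card := by
  apply hG _ (Finset.singleton_nonempty v)
  intro h
  have := congrArg Finset.card h
  simp at this
  omega

lemma small {a b : E → V} (hG : Good a b) (hn : 2 ≤ Fintype.card V)
    (hd : ∀ v, (cut a b {v}).card ≤ 3) (h2 : dm a b ≤ 2) :
    ∃ α, P a b = (X - C 1) * (X - C 2) ^ α := by
  have : Nonempty V := Fintype.card_pos_iff.1 (by omega)
  have hf : dm a b + Fintype.card V = (nonloops a b).card + 1 := finrank_of_good hG
  have hs := degree_sum a b
  have hge := deg_ge hG hn
  have hsum : 2 * Fintype.card V ≤ ∑ v, (cut a b {v}).card := by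
    have := Finset.sum_le_sum (fun v (_ : v ∈ Finset.univ) => hge v)
    simp at this
    omega
  have hne : (nonloops a b).Nonempty := Finset.card_pos.1 (by omega)
  have hm := monic_P hG
  have hdeg := natDegree_P hG
  have h1 : (X - C 1) ∣ P a b := dvd_iff_isRoot.2 (P_one hne)
  by_cases hd1 : dm a b = 1
  · refine ⟨0, ?_⟩
    rw [pow_zero, mul_one]
    exact eq_of_dvd hm (monic_X_sub_C _) h1 (by rw [natDegree_X_sub_C]; omega)
  · have : ∃ v, (cut a b {v}).card = 3 := by
      by_contra hno
      push Not at hno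
      have : ∑ v, (cut a b {v}).card = 2 * Fintype.card V := by
        rw [Finset.sum_congr rfl (fun v _ => (by
          have := hge v; have := hd v; have := hno v; omega : (cut a b {v}).card = 2))]
        simp; omega
      omega
    obtain ⟨v, hv⟩ := this
    have h2' : (X - C 2) ∣ P a b := dvd_iff_isRoot.2 (P_two hv)
    refine ⟨1, ?_⟩
    rw [pow_one]
    refine eq_of_dvd hm ((monic_X_sub_C _).mul (monic_X_sub_C _)) ?_ ?_
    · refine IsCoprime.mul_dvd ?_ h1 h2'
      exact pairwise_coprime_X_sub_C (K := ℝ) (s := id) Function.injective_id (by norm_num : (1:ℝ) ≠ 2)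
    · rw [natDegree_mul (X_sub_C_ne_zero _) (X_sub_C_ne_zero _), natDegree_X_sub_C,
        natDegree_X_sub_C]
      omega

lemma dm_ge {a b : E → V} (hG : Good a b) (hn : 4 ≤ Fintype.card V) (v0 : V)
    (h0 : ∀ v, v ≠ v0 → (cut a b {v}).card = 3) : 3 ≤ dm a b := by
  have : Nonempty V := ⟨v0⟩
  have hf : dm a b + Fintype.card V = (nonloops a b).card + 1 := finrank_of_good hG
  have hs := degree_sum a b
  have hge := deg_ge hG (by omega) v0
  rw [← Finset.add_sum_erase _ _ (Finset.mem_univ v0),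
    Finset.sum_congr rfl (fun v hv => h0 v (Finset.ne_of_mem_erase hv))] at hs
  simp [Finset.card_erase_of_mem] at hs
  omega

/-- no small nontrivial cuts and `dm ≥ 3` implies cubic -/
lemma cubic_of {a b : E → V} (hG : Good a b) (hn : 4 ≤ Fintype.card V)
    (hd : ∀ v, (cut a b {v}).card ≤ 3)
    (hnt : ∀ S : Finset V, 2 ≤ S.card → 2 ≤ Sᶜ.card → 4 ≤ (cut a b S).card) (u : V) :
    (cut a b {u}).card = 3 := by
  by_contra hu
  have hge := deg_ge hG (by omega) u
  have h2 : (cut a b {u}).card = 2 := by have := hd u; omega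
  obtain ⟨e, he⟩ : (cut a b {u}).Nonempty := Finset.card_pos.1 (by omega)
  obtain ⟨v, hv, hev⟩ : ∃ v, v ≠ u ∧ e ∉ cut a b {u, v} ∧ e ∈ cut a b {v} := by
    rw [mem_cut] at he
    simp only [Finset.mem_singleton] at he
    by_cases h : a e = u
    · refine ⟨b e, fun h' => he (by simp [h, h']), ?_, ?_⟩
      · simp [mem_cut, h]
      · simp only [mem_cut, Finset.mem_singleton]; intro h'
        exact he (by rw [← h'.2 trivial])
    · refine ⟨a e, h, ?_, ?_⟩
      · have : b e = u := by tauto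
        simp [mem_cut, this]
      · simp only [mem_cut, Finset.mem_singleton]; intro h'
        exact he (by rw [h'.1 trivial])
  have hsub : cut a b {u, v} ⊆ (cut a b {u}).erase e ∪ (cut a b {v}).erase e := by
    intro e' he'
    have hne : e' ≠ e := by rintro rfl; exact hev.1 he'
    simp only [Finset.mem_union, Finset.mem_erase, mem_cut, Finset.mem_insert,
      Finset.mem_singleton] at he' ⊢
    tauto
  have h3 := (Finset.card_le_card hsub).trans (Finset.card_union_le _ _)
  rw [Finset.card_erase_of_mem he, Finset.card_erase_of_mem hev.2] at h3
  have hc : ({u, v} : Finset V).card = 2 := Finset.card_pair hv.symm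
  have := hnt {u, v} (by omega) (by rw [Finset.card_compl]; omega)
  have := hd v
  omega

def Concl (a b : E → V) : Prop :=
  ∃ α β : ℕ, P a b = (X - C 1) * (X - C 2) ^ α * (X - C 3) ^ β ∧
    ((∀ S : Finset V, S.card = 2 → 3 ≤ (cut a b S).card) →
      (∃ v0, ∀ v, v ≠ v0 → (cut a b {v}).card = 3) → 4 ≤ Fintype.card V → 1 ≤ β) ∧
    ((∀ S : Finset V, S.card = 2 → 3 ≤ (cut a b S).card) →
      (∀ v, (cut a b {v}).card = 3) → 6 ≤ Fintype.card V → 2 ≤ β)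

set_option maxHeartbeats 1000000 in
lemma main_aux (N : ℕ) : ∀ (V : Type) [Fintype V] (a b : E → V), Fintype.card V ≤ N →
    2 ≤ Fintype.card V → Good a b → (∀ v, (cut a b {v}).card ≤ 3) → (P a b).Splits →
    Concl a b := by
  induction N with
  | zero => intro V _ a b h1 h2; omega
  | succ N ih =>
  intro V _ a b hN hn hG hd hsp
  by_cases hdm : dm a b ≤ 2
  · obtain ⟨α, hα⟩ := small hG hn hd hdm
    refine ⟨α, 0, by simpa using hα, ?_, ?_⟩
    · rintro - ⟨v0, h0⟩ h4
      have := dm_ge hG h4 v0 h0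
      omega
    · rintro - h3 h6
      have : Nonempty V := Fintype.card_pos_iff.1 (by omega)
      obtain ⟨v0⟩ := this
      have := dm_ge hG (by omega) v0 (fun v _ => h3 v)
      omega
  -- general step for a small nontrivial cut
  have step : ∀ A : Finset V, 2 ≤ A.card → 2 ≤ Aᶜ.card → (cut a b A).card ≤ 3 → ∀ q : ℝ[X],
      q ≠ 0 → q.Splits →
      P a b * q = P (pr A ∘ a) (pr A ∘ b) * P (pr Aᶜ ∘ a) (pr Aᶜ ∘ b) →
      Concl (pr A ∘ a) (pr A ∘ b) ∧ Concl (pr Aᶜ ∘ a) (pr Aᶜ ∘ b) := by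
    intro A hA hA' hc q hq hqs hfac
    have hcc := Finset.card_add_card_compl A
    have hP0 : P a b ≠ 0 := (monic_P hG).ne_zero
    have hs := hsp.mul hqs
    have hne := mul_ne_zero hP0 hq
    constructor
    · refine ih _ _ _ ?_ ?_ (good_pr hG (Finset.card_pos.1 (by omega))) (deg_pr hd hc) ?_
      · rw [card_opt]; omega
      · rw [card_opt]; omega
      · exact hs.of_dvd hne (Dvd.intro _ hfac.symm)
    · refine ih _ _ _ ?_ ?_ (good_pr hG (Finset.card_pos.1 (by rw [compl_compl]; omega)))
        (deg_pr hd (by rw [cut_compl]; exact hc)) ?_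
      · rw [card_opt]; omega
      · rw [card_opt]; omega
      · exact hs.of_dvd hne (Dvd.intro_left _ hfac.symm)
  -- lower bounds
  have bounds : ∀ A : Finset V, 2 ≤ A.card → 2 ≤ Aᶜ.card →
      ((cut a b A).card = 2 ∨ ((cut a b A).card = 3 ∧
        ∀ S : Finset V, 2 ≤ S.card → 2 ≤ Sᶜ.card → (cut a b S).card ≠ 2)) →
      ∀ β₁ β₂ : ℕ,
      ((∀ S : Finset (Option A), S.card = 2 → 3 ≤ (cut (pr A ∘ a) (pr A ∘ b) S).card) →
        (∃ v0, ∀ v, v ≠ v0 → (cut (pr A ∘ a) (pr A ∘ b) {v}).card = 3) →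
        4 ≤ Fintype.card (Option A) → 1 ≤ β₁) →
      ((∀ S : Finset (Option (Aᶜ : Finset V)), S.card = 2 →
          3 ≤ (cut (pr Aᶜ ∘ a) (pr Aᶜ ∘ b) S).card) →
        (∃ v0, ∀ v, v ≠ v0 → (cut (pr Aᶜ ∘ a) (pr Aᶜ ∘ b) {v}).card = 3) →
        4 ≤ Fintype.card (Option (Aᶜ : Finset V)) → 1 ≤ β₂) →
      ((∀ S : Finset V, S.card = 2 → 3 ≤ (cut a b S).card) →
        (∃ v0, ∀ v, v ≠ v0 → (cut a b {v}).card = 3) → 4 ≤ Fintype.card V → 1 ≤ β₁ + β₂) ∧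
      ((∀ S : Finset V, S.card = 2 → 3 ≤ (cut a b S).card) →
        (∀ v, (cut a b {v}).card = 3) → 6 ≤ Fintype.card V → 2 ≤ β₁ + β₂) := by
    intro A hA hA' hk β₁ β₂ H1 H2
    have hk' : (cut a b Aᶜ).card = 2 ∨ ((cut a b Aᶜ).card = 3 ∧
        ∀ S : Finset V, 2 ≤ S.card → 2 ≤ Sᶜ.card → (cut a b S).card ≠ 2) := by
      rw [cut_compl]; exact hk
    have L1 : (∀ S : Finset V, S.card = 2 → 3 ≤ (cut a b S).card) →
        (∀ v ∈ A, (cut a b {v}).card = 3) → 1 ≤ β₁ := by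
      intro hS h3
      obtain ⟨s1, s2, s3⟩ := side hG hS hA hA' h3 hk
      exact H1 s1 ⟨none, s2⟩ s3
    have L2 : (∀ S : Finset V, S.card = 2 → 3 ≤ (cut a b S).card) →
        (∀ v ∈ Aᶜ, (cut a b {v}).card = 3) → 1 ≤ β₂ := by
      intro hS h3
      obtain ⟨s1, s2, s3⟩ := side hG hS hA' (by rw [compl_compl]; exact hA) h3 hk'
      exact H2 s1 ⟨none, s2⟩ s3
    constructor
    · rintro hS ⟨v0, h0⟩ -
      by_cases hv : v0 ∈ A
      · have := L2 hS (fun v hv' => h0 v (by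
          rintro rfl; exact (Finset.mem_compl.1 hv') hv))
        omega
      · have := L1 hS (fun v hv' => h0 v (by rintro rfl; exact hv hv'))
        omega
    · intro hS h3 _
      have := L1 hS (fun v _ => h3 v)
      have := L2 hS (fun v _ => h3 v)
      omega
  by_cases hc2 : ∃ A : Finset V, 2 ≤ A.card ∧ 2 ≤ Aᶜ.card ∧ (cut a b A).card = 2
  · obtain ⟨A, hA, hA', hc⟩ := hc2
    have hfac := fac2 a b A hc
    obtain ⟨⟨α₁, β₁, e1, f1, -⟩, ⟨α₂, β₂, e2, f2, -⟩⟩ :=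
      step A hA hA' (by omega) _ (X_sub_C_ne_zero 1) (Splits.X_sub_C 1) hfac
    refine ⟨α₁ + α₂, β₁ + β₂, ?_, bounds A hA hA' (Or.inl hc) β₁ β₂ f1 f2⟩
    apply mul_right_cancel₀ (X_sub_C_ne_zero (1:ℝ))
    rw [hfac, e1, e2]
    ring
  push Not at hc2
  by_cases hc3 : ∃ A : Finset V, 2 ≤ A.card ∧ 2 ≤ Aᶜ.card ∧ (cut a b A).card = 3
  · obtain ⟨A, hA, hA', hc⟩ := hc3
    have hfac := fac3 a b A hc
    obtain ⟨⟨α₁, β₁, e1, f1, -⟩, ⟨α₂, β₂, e2, f2, -⟩⟩ :=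
      step A hA hA' (by omega) _ (mul_ne_zero (X_sub_C_ne_zero 1) (X_sub_C_ne_zero 2))
        ((Splits.X_sub_C 1).mul (Splits.X_sub_C 2)) hfac
    have hα : α₁ + α₂ ≠ 0 := by
      intro h0
      have h1 : α₁ = 0 := by omega
      have h2 : α₂ = 0 := by omega
      have := congrArg (eval (2:ℝ)) hfac
      rw [e1, e2, h1, h2] at this
      simp at this
      norm_num at this
    obtain ⟨k, hk⟩ := Nat.exists_eq_succ_of_ne_zero hα
    refine ⟨k, β₁ + β₂, ?_, bounds A hA hA' (Or.inr ⟨hc, hc2⟩) β₁ β₂ f1 f2⟩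
    apply mul_right_cancel₀ (mul_ne_zero (X_sub_C_ne_zero (1:ℝ)) (X_sub_C_ne_zero (2:ℝ)))
    rw [hfac, e1, e2]
    have : (X - C (2:ℝ)) ^ α₁ * (X - C (2:ℝ)) ^ α₂ = (X - C (2:ℝ)) ^ k * (X - C (2:ℝ)) := by
      rw [← pow_add, hk, pow_succ]
    linear_combination (X - C 1) ^ 2 * (X - C 3) ^ β₁ * (X - C 3) ^ β₂ * this
  push Not at hc3
  have hnt : ∀ S : Finset V, 2 ≤ S.card → 2 ≤ Sᶜ.card → 4 ≤ (cut a b S).card := by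
    intro S h1 h2
    have h3 := hc2 S h1 h2
    have h4 := hc3 S h1 h2
    have h5 := hG S (Finset.card_pos.1 (by omega)) (by rintro rfl; simp at h2)
    omega
  have hV : Nonempty V := Fintype.card_pos_iff.1 (by omega)
  have hn4 : 4 ≤ Fintype.card V := by
    have hf : dm a b + Fintype.card V = (nonloops a b).card + 1 := finrank_of_good hG
    have hs := degree_sum a b
    have : ∑ v, (cut a b {v}).card ≤ 3 * Fintype.card V := by
      have := Finset.sum_le_sum (fun v (_ : v ∈ Finset.univ) => hd v)
      simp at this
      omega
    omega
  have h3 := cubic_of hG hn4 hd hnt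
  obtain ⟨h4, hP⟩ := base_case hG h3 hn4 hnt hsp
  refine ⟨1, 1, by rw [hP]; ring, fun _ _ _ => le_rfl, fun _ _ h => by omega⟩

end
end FlowAux


namespace FlowAux
section
open scoped Classical
variable {V E M : Type} [Fintype V] [Fintype E]

def CLe (p q : ℤ[X]) : Prop := ∀ i, 0 ≤ p.coeff i ∧ p.coeff i ≤ q.coeff i

lemma CLe.mul {p q p' q' : ℤ[X]} (h : CLe p q) (h' : CLe p' q') : CLe (p * p') (q * q') := by
  intro i
  rw [coeff_mul, coeff_mul]
  constructor
  · exact Finset.sum_nonneg fun x _ => mul_nonneg (h _).1 (h' _).1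
  · exact Finset.sum_le_sum fun x _ =>
      mul_le_mul (h _).2 (h' _).2 (h' _).1 ((h _).1.trans (h _).2)

lemma CLe.lin {r s : ℤ} (h0 : 0 ≤ r) (h : r ≤ s) : CLe (X + C r) (X + C s) := by
  intro i
  rw [coeff_add, coeff_add, coeff_X, coeff_C, coeff_C]
  split_ifs <;> constructor <;> omega

lemma CLe.pow {p q : ℤ[X]} (h : CLe p q) (k : ℕ) : CLe (p ^ k) (q ^ k) := by
  induction k with
  | zero =>
    intro i
    rw [pow_zero, pow_zero, coeff_one]
    split_ifs <;> simp
  | succ k ih => rw [pow_succ, pow_succ]; exact ih.mul h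

lemma final_ineq (α β : ℕ) (hβ : 2 ≤ β) (i : ℕ) :
    ((X + 1) * (X + 2) ^ (α + β - 2) * (X + 3) ^ 2 : ℤ[X]).coeff i ≤
      |((X - C 1) * (X - C 2) ^ α * (X - C 3) ^ β : ℤ[X]).coeff i| := by
  obtain ⟨k, rfl⟩ := Nat.exists_eq_add_of_le hβ
  have e1 : ((X + 1) * (X + 2) ^ (α + (2 + k) - 2) * (X + 3) ^ 2 : ℤ[X]) =
      (X + C 1) * (X + C 2) ^ α * (X + C 3) ^ 2 * (X + C 2) ^ k := by
    have : α + (2 + k) - 2 = α + k := by omega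
    rw [this]
    simp only [map_one, map_ofNat]
    ring
  have hle : CLe ((X + C 1) * (X + C 2) ^ α * (X + C 3) ^ 2 * (X + C 2) ^ k)
      ((X + C 1) * (X + C 2) ^ α * (X + C 3) ^ 2 * (X + C 3) ^ k) :=
    CLe.mul (CLe.mul (CLe.mul (CLe.lin (by norm_num) le_rfl) ((CLe.lin (by norm_num) le_rfl).pow _))
      ((CLe.lin (by norm_num) le_rfl).pow _)) ((CLe.lin (by norm_num) (by norm_num)).pow _)
  have e2 : ((X - C 1) * (X - C 2) ^ α * (X - C 3) ^ (2 + k) : ℤ[X]).comp (C (-1) * X) =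
      C ((-1) ^ (1 + α + (2 + k))) *
        ((X + C 1) * (X + C 2) ^ α * (X + C 3) ^ 2 * (X + C 3) ^ k) := by
    have h : ∀ r : ℤ, (C (-1) * X - C r : ℤ[X]) = C (-1) * (X + C r) := by
      intro r
      simp only [map_neg, map_one]; ring
    simp only [mul_comp, pow_comp, sub_comp, X_comp, C_comp, h, mul_pow, map_pow]
    ring
  have e3 := congrArg (fun p => |coeff p i|) e2
  simp only [comp_C_mul_X_coeff, coeff_C_mul, abs_mul, abs_pow, abs_neg, abs_one, one_pow,
    mul_one, one_mul] at e3
  rw [e1, e3]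
  exact (hle i).2.trans (le_abs_self _)

lemma splits_of_real {p : ℝ[X]} (h0 : p ≠ 0)
    (h : ∀ z : ℂ, (p.map (algebraMap ℝ ℂ)).IsRoot z → z.im = 0) : p.Splits := by
  rw [splits_iff_splits]
  refine Or.inr fun {g} hg hgp => ?_
  obtain ⟨z, hz⟩ := IsAlgClosed.exists_root (g.map (algebraMap ℝ ℂ)) (by
    rw [degree_map]; exact (degree_pos_of_irreducible hg).ne')
  have hz0 := h z (hz.dvd (Polynomial.map_dvd _ hgp))
  have hz' : z = algebraMap ℝ ℂ z.re := by
    apply Complex.ext <;> simp [hz0]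
  rw [hz', IsRoot, eval_map_algebraMap, aeval_algebraMap_apply] at hz
  have : g.IsRoot z.re := by
    have := (map_eq_zero_iff _ (algebraMap ℝ ℂ).injective).1 hz
    simpa using this
  exact degree_eq_one_of_irreducible_of_root hg this

/-- `a`, `b` are endpoint maps of the simple graph `G`. -/
structure Ends (G : SimpleGraph V) (a b : Sym2 V → V) : Prop where
  edge : ∀ e ∈ G.edgeSet, s(a e, b e) = e
  loop : ∀ e, e ∉ G.edgeSet → a e = b e

lemma exists_ends (G : SimpleGraph V) : ∃ a b, Ends G a b := by
  have : ∀ e : Sym2 V, ∃ p : V × V, s(p.1, p.2) = e := by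
    intro e
    induction e with | _ x y => exact ⟨(x, y), rfl⟩
  choose f hf using this
  refine ⟨fun e => (f e).1, fun e => if e ∈ G.edgeSet then (f e).2 else (f e).1, ?_, ?_⟩
  · intro e he
    simp [he, hf]
  · intro e he
    simp [he]

variable {G : SimpleGraph V} {a b : Sym2 V → V}

lemma Ends.adj (h : Ends G a b) {e : Sym2 V} (he : e ∈ G.edgeSet) : G.Adj (a e) (b e) := by
  rw [← SimpleGraph.mem_edgeSet, h.edge e he]; exact he

lemma Ends.mem_nonloops (h : Ends G a b) {e : Sym2 V} : e ∈ nonloops a b ↔ e ∈ G.edgeSet := by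
  rw [FlowAux.mem_nonloops]
  constructor
  · intro hne
    by_contra hc
    exact hne (h.loop e hc)
  · intro he
    exact (h.adj he).ne

lemma Ends.nonloops (h : Ends G a b) : nonloops a b = G.edgeSet.toFinite.toFinset := by
  ext e
  rw [h.mem_nonloops]; simp

lemma Ends.finrank_Pot (h : Ends G a b) {Z : Finset (Sym2 V)} (hZ : Z ⊆ FlowAux.nonloops a b) :
    Module.finrank (ZMod 2) (Pot a b Z) =
      Nat.card (SimpleGraph.fromEdgeSet (↑Z : Set (Sym2 V))).ConnectedComponent := by
  set H := SimpleGraph.fromEdgeSet (↑Z : Set (Sym2 V)) with hH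
  have hinj := LinearMap.funLeft_injective_of_surjective (ZMod 2) (ZMod 2) H.connectedComponentMk
    (fun c => c.exists_rep)
  have hr : Pot a b Z = (LinearMap.funLeft (ZMod 2) (ZMod 2) H.connectedComponentMk).range := by
    ext g
    rw [LinearMap.mem_range]
    constructor
    · intro hg
      have hadj : ∀ v w, H.Adj v w → g v = g w := by
        intro v w hvw
        rw [hH, SimpleGraph.fromEdgeSet_adj] at hvw
        have h1 := h.edge _ (h.mem_nonloops.1 (hZ hvw.1))
        have h2 : g (a s(v, w)) = g (b s(v, w)) := hg _ hvw.1
        rcases Sym2.eq_iff.1 h1 with ⟨x1, x2⟩ | ⟨x1, x2⟩ <;> rw [x1, x2] at h2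
        · exact h2
        · exact h2.symm
      refine ⟨SimpleGraph.ConnectedComponent.lift g ?_, ?_⟩
      · intro v w p _
        induction p with
        | nil => rfl
        | cons hvw _ ih => exact (hadj _ _ hvw).trans (ih (by assumption : SimpleGraph.Walk.IsPath _).of_cons)
      · rfl
    · rintro ⟨c, rfl⟩ e he
      have he' := h.mem_nonloops.1 (hZ he)
      have h1 := h.edge e he'
      simp only [LinearMap.funLeft_apply]
      congr 1
      apply SimpleGraph.ConnectedComponent.sound
      apply SimpleGraph.Adj.reachable
      rw [hH, SimpleGraph.fromEdgeSet_adj, h1]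
      exact ⟨he, (h.adj he').ne⟩
  rw [hr, LinearMap.finrank_range_of_inj hinj, Module.finrank_fintype_fun_eq_card,
    Nat.card_eq_fintype_card]

lemma Ends.flowPoly (h : Ends G a b) : (flowPoly G).map (Int.castRingHom ℝ) = P a b := by
  rw [_root_.flowPoly, P, Polynomial.map_sum, ← h.nonloops]
  refine Finset.sum_congr rfl fun Z hZ => ?_
  have h1 := finrank_Cyc a b Z
  rw [h.finrank_Pot (Finset.mem_powerset.1 hZ)] at h1
  rw [← h1, Nat.add_sub_cancel]
  simp

lemma Ends.mem_cut_singleton (h : Ends G a b) {e : Sym2 V} {v : V} :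
    e ∈ cut a b {v} ↔ e ∈ G.incidenceSet v := by
  rw [mem_cut, SimpleGraph.incidenceSet]
  simp only [Finset.mem_singleton]
  by_cases he : e ∈ G.edgeSet
  · have h1 := h.edge e he
    have h2 := (h.adj he).ne
    constructor
    · intro hh
      refine ⟨he, ?_⟩
      rw [← h1, Sym2.mem_iff]
      tauto
    · rintro ⟨-, hv⟩ hh
      rw [← h1, Sym2.mem_iff] at hv
      rcases hv with hv | hv
      · exact h2 (hv.symm.trans (hh.1 hv.symm).symm)
      · exact h2 ((hh.2 hv.symm).trans hv)
  · rw [h.loop e he]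
    constructor
    · intro hh; exact absurd Iff.rfl hh
    · intro hh; exact absurd hh.1 he

lemma Ends.card_cut (h : Ends G a b) (v : V) :
    (cut a b {v}).card = Nat.card (G.neighborSet v) := by
  have h1 : G.incidenceSet v = ↑(cut a b {v}) := by
    ext e
    rw [Finset.mem_coe, h.mem_cut_singleton]
  rw [← Nat.card_congr (G.incidenceSetEquivNeighborSet v), h1, Nat.card_coe_set_eq,
    Set.ncard_coe_finset]

lemma mem_iff_of_reachable {H : SimpleGraph V} {S : Finset V}
    (hS : ∀ v w, H.Adj v w → (v ∈ S ↔ w ∈ S)) {v w : V} (h : H.Reachable v w) :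
    v ∈ S ↔ w ∈ S := by
  obtain ⟨p⟩ := h
  induction p with
  | nil => exact Iff.rfl
  | cons hvw _ ih => exact (hS _ _ hvw).trans ih

lemma Ends.cut_adj (h : Ends G a b) {S : Finset V} {v w : V} (hvw : G.Adj v w)
    (hc : s(v, w) ∉ cut a b S) : v ∈ S ↔ w ∈ S := by
  rw [mem_cut, not_not] at hc
  rcases Sym2.eq_iff.1 (h.edge s(v, w) hvw) with ⟨x1, x2⟩ | ⟨x1, x2⟩ <;> rw [x1, x2] at hc
  · exact hc
  · exact hc.symm

lemma Ends.good (h : Ends G a b) (hconn : G.Connected)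
    (hbridgeless : ∀ e : Sym2 V, ¬ G.IsBridge e) : Good a b := by
  intro S hS hS'
  by_contra hlt
  have h01 : (cut a b S).card = 0 ∨ (cut a b S).card = 1 := by omega
  rcases h01 with h0 | h1
  · rw [Finset.card_eq_zero] at h0
    obtain ⟨v, hv⟩ := hS
    apply hS'
    ext w
    simp only [Finset.mem_univ, iff_true]
    refine (mem_iff_of_reachable (fun x y hxy => h.cut_adj hxy ?_) (hconn.preconnected v w)).1 hv
    rw [h0]; simp
  · obtain ⟨e, he⟩ := Finset.card_eq_one.1 h1
    have hec : e ∈ cut a b S := by rw [he]; simp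
    have heG := h.mem_nonloops.1 (cut_subset _ _ _ hec)
    apply hbridgeless e
    have hee := h.edge e heG
    rw [← hee, SimpleGraph.isBridge_iff, hee]
    intro hr
    rw [mem_cut] at hec
    apply hec
    refine mem_iff_of_reachable (fun x y hxy => ?_) hr
    rw [SimpleGraph.deleteEdges_adj] at hxy
    refine h.cut_adj hxy.1 ?_
    rw [he]
    simpa using hxy.2

lemma Ends.pair (h : Ends G a b) (h3 : ∀ v, (cut a b {v}).card = 3) (S : Finset V)
    (hS : S.card = 2) : 3 ≤ (cut a b S).card := by
  obtain ⟨u, v, huv, rfl⟩ := Finset.card_eq_two.1 hS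
  have hint : cut a b {u} ∩ cut a b {v} ⊆ {s(u, v)} := by
    intro e he
    rw [Finset.mem_inter, h.mem_cut_singleton, h.mem_cut_singleton] at he
    rw [Finset.mem_singleton]
    exact (Sym2.mem_and_mem_iff huv).1 ⟨he.1.2, he.2.2⟩
  have hsub : (cut a b {u} ∪ cut a b {v}).erase s(u, v) ⊆ cut a b {u, v} := by
    intro e he
    rw [Finset.mem_erase, Finset.mem_union] at he
    obtain ⟨hne, he⟩ := he
    have heG : e ∈ G.edgeSet := by
      rcases he with he | he
      · exact h.mem_nonloops.1 (cut_subset _ _ _ he)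
      · exact h.mem_nonloops.1 (cut_subset _ _ _ he)
    have hee := h.edge e heG
    have hab := (h.adj heG).ne
    have hn1 : ¬ (a e = u ∧ b e = v) := by
      rintro ⟨x1, x2⟩; rw [x1, x2] at hee; exact hne hee.symm
    have hn2 : ¬ (a e = v ∧ b e = u) := by
      rintro ⟨x1, x2⟩; rw [x1, x2, Sym2.eq_swap] at hee; exact hne hee.symm
    simp only [mem_cut, Finset.mem_singleton, Finset.mem_insert] at he ⊢
    grind
  have c1 := Finset.card_le_card hint
  have c2 := Finset.card_le_card hsub
  have c3 := Finset.card_union_add_card_inter (cut a b {u}) (cut a b {v})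
  have c4 := Finset.pred_card_le_card_erase (s := cut a b {u} ∪ cut a b {v}) (a := s(u, v))
  rw [h3, h3] at c3
  simp only [Finset.card_singleton] at c1
  omega

end
end FlowAux

/-- Improved lower bound on the absolute values of the coefficients of the flow polynomial
of a connected bridgeless simple cubic graph (n ≥ 8) with only real flow roots. -/
theorem stmt_4 {V : Type} [Fintype V] (G : SimpleGraph V)
    (hconn : G.Connected) (hbridgeless : ∀ e : Sym2 V, ¬ G.IsBridge e)
    (hcubic : ∀ v : V, Nat.card (G.neighborSet v) = 3)
    (hreal : ∀ z : ℂ, ((flowPoly G).map (Int.castRingHom ℂ)).IsRoot z → z.im = 0)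
    (n m : ℕ) (hn : n = Fintype.card V) (hm : m = edgeCount G) (hn8 : 8 ≤ n) :
    ∀ i ≤ m - n + 1,
      ((X + 1) * (X + 2) ^ (n / 2 - 2) * (X + 3) ^ 2 : Polynomial ℤ).coeff i ≤
        |(flowPoly G).coeff i| := by
  intro i _
  classical
  obtain ⟨a, b, h⟩ := FlowAux.exists_ends G
  have hG := h.good hconn hbridgeless
  have h3 : ∀ v, (FlowAux.cut a b {v}).card = 3 := fun v => (h.card_cut v).trans (hcubic v)
  have hP := h.flowPoly
  have hmon := FlowAux.monic_P hG
  have hsp : (FlowAux.P a b).Splits := by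
    refine FlowAux.splits_of_real hmon.ne_zero fun z hz => hreal z ?_
    rw [← hP, Polynomial.map_map] at hz
    rwa [RingHom.ext_int (Int.castRingHom ℂ) ((algebraMap ℝ ℂ).comp (Int.castRingHom ℝ))]
  obtain ⟨α, β, e, -, hβ⟩ := FlowAux.main_aux (Fintype.card V) V a b le_rfl (by omega) hG
    (fun v => (h3 v).le) hsp
  have hβ2 := hβ (h.pair h3) h3 (by omega)
  have : Nonempty V := Fintype.card_pos_iff.1 (by omega)
  have hf : FlowAux.dm a b + Fintype.card V = (FlowAux.nonloops a b).card + 1 :=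
    FlowAux.finrank_of_good hG
  have hs := FlowAux.degree_sum a b
  rw [Finset.sum_congr rfl (fun v _ => h3 v)] at hs
  simp only [Finset.sum_const, Finset.card_univ, smul_eq_mul] at hs
  have hdeg := FlowAux.natDegree_P hG
  rw [e, Polynomial.natDegree_mul (by
      exact mul_ne_zero (X_sub_C_ne_zero _) (pow_ne_zero _ (X_sub_C_ne_zero _)))
      (pow_ne_zero _ (X_sub_C_ne_zero _)),
    Polynomial.natDegree_mul (X_sub_C_ne_zero _) (pow_ne_zero _ (X_sub_C_ne_zero _)),
    Polynomial.natDegree_pow, Polynomial.natDegree_pow, natDegree_X_sub_C, natDegree_X_sub_C,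
    natDegree_X_sub_C] at hdeg
  have hαβ : n / 2 = α + β := by omega
  have hF : flowPoly G = (X - C 1) * (X - C 2) ^ α * (X - C 3) ^ β := by
    apply Polynomial.map_injective (Int.castRingHom ℝ) Int.cast_injective
    rw [hP, e]
    simp [show (C (2:ℝ)) = 2 from map_ofNat C 2, show (C (3:ℝ)) = 3 from map_ofNat C 3]
  rw [hF, hαβ]
  exact FlowAux.final_ineq α β hβ2 i
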